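/- arXiv:2308.09996 — 3 statements merged into one kernel-verified Lean document; each statement's English description precedes it below -/
import Mathlib

section
/- For every finite simple graph G with at least one edge, the v-number of the cover ideal satisfies v(J(G)) ≤ pd_R(R/I(G)) − 1, where pd_R denotes projective dimension as a graded R-module. (By Terai's formula this is equivalent to v(J(G)) ≤ reg(R/J(G)).) -/
open MvPolynomial CategoryTheory

noncomputable section

/-- A set of vertices is a vertex cover if it meets every edge. -/
def IsVertexCover {V : Type} (G : SimpleGraph V) (C : Set V) : Prop :=
  ∀ ⦃u v : V⦄, G.Adj u v → u ∈ C ∨ v ∈ C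

/-- A vertex cover minimal with respect to inclusion. -/
def IsMinimalVertexCover {V : Type} (G : SimpleGraph V) (C : Set V) : Prop :=
  IsVertexCover G C ∧ ∀ C' ⊆ C, IsVertexCover G C' → C' = C

/-- `α₀(G)`: the minimum cardinality of a vertex cover of `G`. -/
def coverNumber {V : Type} (G : SimpleGraph V) : ℕ :=
  sInf {k | ∃ C : Set V, IsVertexCover G C ∧ C.ncard = k}

/-- `bight(I(G))`: the maximum cardinality of a minimal vertex cover of `G`. -/
def bigHeight {V : Type} (G : SimpleGraph V) : ℕ :=
  sSup {k | ∃ C : Set V, IsMinimalVertexCover G C ∧ C.ncard = k}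

/-- The edge ideal `I(G) ⊆ K[x_v : v ∈ V]`, generated by the monomials
`x_u * x_v` over the edges `{u,v}` of `G`. -/
def edgeIdeal (K : Type) [Field K] {V : Type} (G : SimpleGraph V) :
    Ideal (MvPolynomial V K) :=
  Ideal.span {m | ∃ u v : V, G.Adj u v ∧ m = X u * X v}

/-- The cover ideal `J(G) = ⋂_{{u,v} ∈ E(G)} ⟨x_u, x_v⟩`. -/
def coverIdeal (K : Type) [Field K] {V : Type} (G : SimpleGraph V) :
    Ideal (MvPolynomial V K) :=
  ⨅ (u : V) (v : V) (_ : G.Adj u v), Ideal.span {X u, X v}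

/-- The v-number of a graded ideal `I`: the least `d ≥ 0` such that there is a
homogeneous polynomial `f` of degree `d` with `I : f` a prime ideal. -/
def vNumber {K : Type} [Field K] {V : Type} (I : Ideal (MvPolynomial V K)) : ℕ :=
  sInf {d | ∃ f : MvPolynomial V K, f.IsHomogeneous d ∧
    (I.colon (Ideal.span {f})).IsPrime}

/-- The homogeneous maximal ideal `⟨x_1, …, x_n⟩` of the polynomial ring. -/
def maxIdeal (K : Type) [Field K] (V : Type) : Ideal (MvPolynomial V K) :=
  Ideal.span (Set.range (X : V → MvPolynomial V K))

/-- The depth of the module `M` with respect to the ideal `J`: the supremum of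
the lengths of regular sequences on `M` consisting of elements of `J`. -/
def mdepth {R : Type} [CommRing R] (J : Ideal R) (M : Type) [AddCommGroup M]
    [Module R M] : ℕ :=
  sSup {k | ∃ rs : List R, rs.length = k ∧ (∀ r ∈ rs, r ∈ J) ∧
    RingTheory.Sequence.IsRegular M rs}

/-- The projective dimension of an `R`-module `M`, characterized by the
vanishing of `Ext^i(M, N)` for all `i > d` and all modules `N`. -/
def projDim (R : Type) [CommRing R] (M : ModuleCat.{0} R) : ℕ :=
  sInf {d : ℕ | ∀ (N : ModuleCat.{0} R) (i : ℕ), d < i →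
    Subsingleton (((Ext R (ModuleCat.{0} R) i).obj (Opposite.op M)).obj N)}

/-!
Let `A` be maximal among the independent sets of vertices for which `G ∖ N[A]` still has an edge
`uv`. Then `G ∖ N[A]` is complete multipartite: if `w` were adjacent to neither end of some edge of
it, `w` could be added to `A`. Let `x^A` be the product of the variables in `A`, and `n` the number
of vertices.

Since `uv` is the only edge inside `A ∪ {u, v}`, the colon of `J(G)` by the product of the variables
outside `A ∪ {u, v}` is the prime `(x_u, x_v)`, so `v(J(G)) ≤ n - |A| - 2`.

On the other side, split the variables outside `A` into those not adjacent to `u` and those adjacent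
to `u`, generating ideals `P` and `Q`. Outside `N[A]` every vertex of the first kind is adjacent to
every vertex of the second, so `x^A (P ∩ Q) ⊆ I(G)`, and multiplication by `x^A` on `P` and by `0`
on `Q` glue to a homomorphism `P + Q → R / I(G)`. It is not multiplication by an element `g`: the
coefficients of `x^A` in `g - x^A` and in `g` would both vanish, because `x_u` and `x_v` multiply
these polynomials into `I(G)`. Hence `Ext¹(R / (P + Q), R / I(G)) ≠ 0`. But `P + Q` is generated by
a regular sequence of length `n - |A|`, and dimension shifting shows that this `Ext¹` vanishes as
soon as `pd(R / I(G)) < n - |A| - 1`.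
-/

section ProjectiveDimension

universe w v u

variable {C : Type u} [Category.{v} C] [Abelian C] {X : C} (P : ProjectiveResolution X) (Y : C)
  (i : ℕ)

theorem subsingleton_abelianExt_succ_iff [HasExt.{w} C] :
    Subsingleton (Abelian.Ext X Y (i + 1)) ↔
      ∀ f : P.complex.X (i + 1) ⟶ Y, P.complex.d (i + 2) (i + 1) ≫ f = 0 →
        ∃ g, P.complex.d (i + 1) i ≫ g = f := by
  constructor
  · intro _ f hf
    exact (P.extMk_eq_zero_iff f (i + 2) rfl hf i rfl).1 (Subsingleton.elim _ _)
  · intro h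
    refine subsingleton_of_forall_eq 0 fun e ↦ ?_
    obtain ⟨f, hf, rfl⟩ := P.extMk_surjective e (i + 2) rfl
    exact (P.extMk_eq_zero_iff f (i + 2) rfl hf i rfl).2 (h f hf)

theorem subsingleton_ext_obj_succ_iff (R : Type*) [Ring R] [Linear R C] [EnoughProjectives C] :
    Subsingleton (((Ext R C (i + 1)).obj (Opposite.op X)).obj Y) ↔
      ∀ f : P.complex.X (i + 1) ⟶ Y, P.complex.d (i + 2) (i + 1) ≫ f = 0 →
        ∃ g, P.complex.d (i + 1) i ≫ g = f := by
  rw [(P.isoExt (R := R) (i + 1) Y).toLinearEquiv.toEquiv.subsingleton_congr,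
    ← ModuleCat.isZero_iff_subsingleton, ← HomologicalComplex.exactAt_iff_isZero_homology,
    HomologicalComplex.exactAt_iff' _ i (i + 1) (i + 2) (by simp) (by simp),
    ShortComplex.moduleCat_exact_iff]
  rfl

theorem hasProjectiveDimensionLE_iff_subsingleton_ext_obj (R : Type*) [Ring R] [Linear R C]
    [EnoughProjectives C] (d : ℕ) :
    HasProjectiveDimensionLE X d ↔ ∀ (Y : C) (i : ℕ), d < i →
      Subsingleton (((Ext R C i).obj (Opposite.op X)).obj Y) := by
  have := HasExt.standard C
  have subsingleton_iff (Y : C) (i : ℕ) :=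
    (subsingleton_ext_obj_succ_iff (ProjectiveResolution.of X) Y i R).trans
      (subsingleton_abelianExt_succ_iff (ProjectiveResolution.of X) Y i).symm
  constructor
  · rintro h Y (_ | i) hi
    · exact absurd hi (Nat.not_lt_zero d)
    · exact (subsingleton_iff Y i).2 (HasProjectiveDimensionLT.subsingleton X (d + 1) _ hi Y)
  · intro h
    rw [HasProjectiveDimensionLE, hasProjectiveDimensionLT_iff]
    rintro (_ | i) hi Y e
    · exact absurd hi (Nat.not_succ_le_zero d)
    · have := (subsingleton_iff Y i).1 (h Y _ hi)
      exact Subsingleton.elim _ _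

theorem projDim_eq_sInf (R : Type) [CommRing R] (M : ModuleCat.{0} R) :
    projDim R M = sInf {d | HasProjectiveDimensionLE M d} := by
  simp only [hasProjectiveDimensionLE_iff_subsingleton_ext_obj R, projDim]

theorem hasProjectiveDimensionLE_projDim {R : Type} [CommRing R] {M : ModuleCat.{0} R} {d : ℕ}
    (hd : HasProjectiveDimensionLE M d) : HasProjectiveDimensionLE M (projDim R M) := by
  rw [projDim_eq_sInf]
  exact Nat.sInf_mem (s := {d | HasProjectiveDimensionLE M d}) ⟨d, hd⟩

end ProjectiveDimension

section ExtVanishing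

open RingTheory.Sequence Abelian

universe v u

variable {R : Type u} [CommRing R]

theorem isWeaklyRegular_of_flat (M : Type*) [AddCommGroup M] [Module R M] [Module.Flat R M]
    {rs : List R} (h : IsWeaklyRegular R rs) : IsWeaklyRegular M rs :=
  ((TensorProduct.lid R M).isWeaklyRegular_congr rs).1 h.isWeaklyRegular_rTensor

theorem subsingleton_ext_of_isWeaklyRegular [Small.{v} R] {N : ModuleCat.{v} R} {rs : List R}
    (hN : ∀ r ∈ rs, r ∈ Module.annihilator R N) {M : ModuleCat.{v} R}
    (hM : IsWeaklyRegular M rs) {i : ℕ} (hi : i < rs.length) : Subsingleton (Ext N M i) := by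
  induction rs generalizing M i with
  | nil => simp at hi
  | cons r rs ih =>
    obtain ⟨hr, hrs⟩ := (isWeaklyRegular_cons_iff M r rs).1 hM
    obtain ⟨hNr, hNrs⟩ := List.forall_mem_cons.1 hN
    have hS := hr.smulShortComplex_shortExact
    have mono_smul : Mono (AddCommGrpCat.ofHom
        ((Ext.mk₀ (r • 𝟙 M)).postcomp N (add_zero i))) := by
      cases i with
      | zero =>
        have := hS.mono_f
        exact (AddCommGrpCat.mono_iff_injective _).2
          (Ext.postcomp_mk₀_injective_of_mono N (M.smulShortComplex r).f)
      | succ j =>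
        have := ih hNrs (M := ModuleCat.of R (QuotSMulTop r M)) hrs (Nat.lt_of_succ_lt_succ hi)
        exact (Ext.covariant_sequence_exact₁' N hS j (j + 1) rfl).mono_g
          ((AddCommGrpCat.isZero_of_iff_subsingleton.2 this).eq_zero_of_src _)
    exact AddCommGrpCat.subsingleton_of_isZero
      (Limits.IsZero.of_mono_eq_zero _ (Ext.postcomp_smul_id_eq_zero_of_mem_annihilator hNr i))

theorem subsingleton_ext_of_hasProjectiveDimensionLE [Small.{v} R] {N : ModuleCat.{v} R}
    {rs : List R} (hR : IsWeaklyRegular R rs) (hN : ∀ r ∈ rs, r ∈ Module.annihilator R N) {d : ℕ}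
    {M : ModuleCat.{v} R} (hM : HasProjectiveDimensionLE M d) {i : ℕ} (hi : i + d < rs.length) :
    Subsingleton (Ext N M i) := by
  induction d generalizing M i with
  | zero =>
    have : Module.Projective R M :=
      (IsProjective.iff_projective M).2 (projective_iff_hasProjectiveDimensionLT_one.2 hM)
    exact subsingleton_ext_of_isWeaklyRegular hN (isWeaklyRegular_of_flat M hR) hi
  | succ d ih =>
    have hS := M.shortExact_projectiveShortComplex
    have := ih ((hS.hasProjectiveDimensionLT_X₃_iff d inferInstance).1 hM) (i := i + 1) (by omega)
    have := subsingleton_ext_of_isWeaklyRegular hN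
      (isWeaklyRegular_of_flat M.projectiveShortComplex.X₂ hR) (i := i) (by omega)
    refine subsingleton_of_forall_eq 0 fun e ↦ ?_
    obtain ⟨x, rfl⟩ := Ext.covariant_sequence_exact₃ N hS e rfl (Subsingleton.elim _ _)
    rw [Subsingleton.elim x 0, Ext.zero_comp]

theorem exists_forall_eq_smul_of_subsingleton_ext {M : Type u} [AddCommGroup M]
    [Module R M] {I : Ideal R}
    (hI : Subsingleton (Ext (ModuleCat.of R (R ⧸ I)) (ModuleCat.of R M) 1)) (φ : I →ₗ[R] M) :
    ∃ m : M, ∀ x : I, φ x = (x : R) • m := by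
  have exact_subtype_mkQ := LinearMap.exact_subtype_mkQ I
  have hS := ModuleCat.shortComplex_shortExact
    (ModuleCat.shortComplexOfCompEqZero I.subtype I.mkQ exact_subtype_mkQ.linearMap_comp_eq_zero)
    exact_subtype_mkQ I.injective_subtype I.mkQ_surjective
  obtain ⟨e, he⟩ := Ext.contravariant_sequence_exact₁ hS (ModuleCat.of R M)
    (Ext.mk₀ (ModuleCat.ofHom φ)) rfl (hI.elim _ _)
  obtain ⟨g, rfl⟩ := (Ext.mk₀_bijective _ _).2 e
  rw [Ext.mk₀_comp_mk₀, (Ext.mk₀_bijective _ _).1.eq_iff] at he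
  refine ⟨g.hom (1 : R), fun x ↦ ?_⟩
  rw [← map_smul, smul_eq_mul, mul_one]
  exact (ConcreteCategory.congr_hom he x).symm

theorem exists_glue_of_hasProjectiveDimensionLE {M : Type u} [AddCommGroup M] [Module R M]
    {d : ℕ} (hM : HasProjectiveDimensionLE (ModuleCat.of R M) d) {P Q : Ideal R} {rs : List R}
    (hR : IsWeaklyRegular R rs) (hrs : ∀ r ∈ rs, r ∈ P ⊔ Q) (hd : d + 1 < rs.length) {x y : M}
    (h : ∀ r ∈ P ⊓ Q, r • x = r • y) :
    ∃ m : M, (∀ p ∈ P, p • m = p • x) ∧ ∀ q ∈ Q, q • m = q • y := by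
  let f := (LinearMap.toSpanSingleton R M x).toPMap P
  let g := (LinearMap.toSpanSingleton R M y).toPMap Q
  have agree (p : f.domain) (q : g.domain) (hpq : (p : R) = q) : f p = g q := by
    obtain ⟨p, hp⟩ := p
    obtain ⟨q, hq⟩ := q
    obtain rfl : p = q := hpq
    exact h p ⟨hp, hq⟩
  have hN : ∀ r ∈ rs, r ∈ Module.annihilator R (R ⧸ (P ⊔ Q)) := by
    simpa only [Ideal.annihilator_quotient] using hrs
  obtain ⟨m, hm⟩ := exists_forall_eq_smul_of_subsingleton_ext
    (subsingleton_ext_of_hasProjectiveDimensionLE hR (N := ModuleCat.of R _) hN hM (i := 1)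
      (by omega))
    (f.sup g agree).toFun
  refine ⟨m, fun p hp ↦ ?_, fun q hq ↦ ?_⟩
  · rw [← hm ⟨p, Ideal.mem_sup_left hp⟩]
    exact ((f.left_le_sup g agree).2 (x := ⟨p, hp⟩) rfl).symm
  · rw [← hm ⟨q, Ideal.mem_sup_right hq⟩]
    exact ((f.right_le_sup g agree).2 (x := ⟨q, hq⟩) rfl).symm

end ExtVanishing

section MonomialIdeals

universe u

theorem hasProjectiveDimensionLE_quotient_sup_span_singleton {R : Type u} [CommRing R]
    {I : Ideal R} {a : R} {d : ℕ}
    (hcolon : HasProjectiveDimensionLE (ModuleCat.of R (R ⧸ I.colon {a})) d)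
    (hI : HasProjectiveDimensionLE (ModuleCat.of R (R ⧸ I)) (d + 1)) :
    HasProjectiveDimensionLE (ModuleCat.of R (R ⧸ I ⊔ Ideal.span {a})) (d + 1) := by
  let mulA : (R ⧸ I.colon {a}) →ₗ[R] R ⧸ I :=
    Submodule.mapQ _ _ (LinearMap.mulLeft R a) fun r hr ↦ by
      simpa only [Submodule.mem_comap, LinearMap.mulLeft_apply, mul_comm a, smul_eq_mul]
        using Submodule.mem_colon_singleton.1 hr
  let proj : (R ⧸ I) →ₗ[R] R ⧸ I ⊔ Ideal.span {a} := Submodule.factor le_sup_left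
  have injective_mulA : Function.Injective mulA := by
    refine (injective_iff_map_eq_zero mulA).2 <| (Submodule.Quotient.forall _).2 fun r hr ↦ ?_
    rw [Submodule.Quotient.mk_eq_zero, Submodule.mem_colon_singleton, smul_eq_mul, mul_comm]
    exact (Submodule.Quotient.mk_eq_zero I).1 hr
  have exact_mulA_proj : Function.Exact mulA proj := by
    refine (Submodule.Quotient.forall _).2 fun r ↦ ⟨fun hr ↦ ?_, ?_⟩
    · obtain ⟨x, hx, y, hy, rfl⟩ := Submodule.mem_sup.1 ((Submodule.Quotient.mk_eq_zero _).1 hr)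
      obtain ⟨c, rfl⟩ := Ideal.mem_span_singleton'.1 hy
      refine ⟨Submodule.Quotient.mk c, (Submodule.Quotient.eq I).2 ?_⟩
      simpa [mul_comm a] using hx
    · rintro ⟨c, hc⟩
      obtain ⟨c, rfl⟩ := Submodule.Quotient.mk_surjective _ c
      rw [← hc]
      exact (Submodule.Quotient.mk_eq_zero _).2 <| Ideal.mem_sup_right <|
        Ideal.mul_mem_right c _ (Ideal.mem_span_singleton_self a)
  have hS := ModuleCat.shortComplex_shortExact
    (ModuleCat.shortComplexOfCompEqZero mulA proj exact_mulA_proj.linearMap_comp_eq_zero)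
    exact_mulA_proj injective_mulA (Submodule.factor_surjective le_sup_left)
  exact hS.hasProjectiveDimensionLT_X₃ (d + 1) hcolon hI

variable {σ R : Type*} [CommRing R]

theorem colon_monomial_span_monomial_image (S : Set (σ →₀ ℕ)) (a : σ →₀ ℕ) :
    (Ideal.span ((fun m ↦ monomial m (1 : R)) '' S)).colon {monomial a 1} =
      Ideal.span ((fun m ↦ monomial m 1) '' ((· - a) '' S)) := by
  ext p
  rw [Submodule.mem_colon_singleton, smul_eq_mul]
  simp only [mem_ideal_span_monomial_image, Set.exists_mem_image, tsub_le_iff_right]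
  constructor
  · intro h m hm
    exact h (m + a) (by rwa [mem_support_iff, coeff_mul_monomial, mul_one, ← mem_support_iff])
  · intro h m hm
    rw [mem_support_iff, coeff_mul_monomial', mul_one, ite_ne_right_iff] at hm
    obtain ⟨b, hb, hbm⟩ := h (m - a) (mem_support_iff.2 hm.2)
    exact ⟨b, hb, by rwa [tsub_add_cancel_of_le hm.1] at hbm⟩

theorem hasProjectiveDimensionLE_quotient_span_monomial_image {ι : Type*} (s : Finset ι)
    (f : ι → σ →₀ ℕ) :
    HasProjectiveDimensionLE (ModuleCat.of (MvPolynomial σ R)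
      (MvPolynomial σ R ⧸ Ideal.span ((fun m ↦ monomial m (1 : R)) '' (f '' s)))) s.card := by
  classical
  induction s using Finset.induction_on generalizing f with
  | empty =>
    rw [Finset.coe_empty, Set.image_empty, Set.image_empty, Ideal.span_empty]
    have : Module.Projective (MvPolynomial σ R)
        (MvPolynomial σ R ⧸ (⊥ : Ideal (MvPolynomial σ R))) :=
      .of_equiv (Submodule.quotEquivOfEqBot ⊥ rfl).symm
    exact projective_iff_hasProjectiveDimensionLT_one.1 ((IsProjective.iff_projective _).1 this)
  | insert i s his ih =>
    have hcolon := ih fun j ↦ f j - f i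
    rw [← Set.image_image (· - f i), ← colon_monomial_span_monomial_image] at hcolon
    have : HasProjectiveDimensionLE _ _ := ih f
    have := hasProjectiveDimensionLE_quotient_sup_span_singleton hcolon
      (hasProjectiveDimensionLT_of_ge _ (s.card + 1) _ (Nat.le_succ _))
    rwa [Finset.card_insert_of_notMem his, Finset.coe_insert, Set.image_insert_eq,
      Set.image_insert_eq, Set.insert_eq, Ideal.span_union, sup_comm]

theorem ofList_map_X (l : List σ) :
    Ideal.ofList (l.map (X : σ → MvPolynomial σ R)) = Ideal.span (X '' {i | i ∈ l}) := by
  rw [Ideal.ofList]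
  congr 1
  ext p
  simp

theorem isWeaklyRegular_map_X {l : List σ} (hl : l.Nodup) :
    RingTheory.Sequence.IsWeaklyRegular (MvPolynomial σ R)
      (l.map (X : σ → MvPolynomial σ R)) := by
  rw [RingTheory.Sequence.isWeaklyRegular_iff]
  intro k hk
  rw [List.length_map] at hk
  rw [isSMulRegular_quotient_iff_mem_of_smul_mem, smul_eq_mul, Ideal.mul_top, ← List.map_take,
    ofList_map_X]
  intro p hp
  rw [mem_ideal_span_X_image] at hp ⊢
  intro m hm
  obtain ⟨i, hi, hmi⟩ := hp (Finsupp.single l[k] 1 + m) (by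
    rwa [List.getElem_map, smul_eq_mul, mem_support_iff, coeff_X_mul, ← mem_support_iff])
  have hne : l[k] ≠ i := by
    rintro rfl
    obtain ⟨j, hj, hjk⟩ := List.mem_take_iff_getElem.1 hi
    have := hl.getElem_inj_iff.1 hjk
    omega
  exact ⟨i, hi, by simpa [Finsupp.single_apply, hne] using hmi⟩

theorem X_mem_span_X_image_iff [Nontrivial R] {s : Set σ} {i : σ} :
    (X i : MvPolynomial σ R) ∈ Ideal.span (X '' s) ↔ i ∈ s := by
  simp [mem_ideal_span_X_image, support_X, Finsupp.single_apply_eq_zero]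

theorem isPrime_span_X_image [IsDomain R] (s : Set σ) :
    (Ideal.span (X '' s : Set (MvPolynomial σ R))).IsPrime := by
  let inclusion : {i // i ∉ s} → σ := Subtype.val
  have eq_ker : Ideal.span (X '' s) =
      RingHom.ker (killCompl (R := R) (f := inclusion) Subtype.val_injective) := by
    ext p
    simp only [mem_ideal_span_X_image, mem_support_iff, RingHom.mem_ker, MvPolynomial.ext_iff,
      coeff_killCompl, coeff_zero]
    constructor
    · intro h m
      by_contra hm
      obtain ⟨i, hi, hmi⟩ := h _ hm
      exact hmi (Finsupp.mapDomain_of_notMem_range m i (by simpa [inclusion] using hi))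
    · intro h m hm
      by_contra! hms
      refine hm (Finsupp.mapDomain_comapDomain inclusion Subtype.val_injective m ?_ ▸ h _)
      intro i hi
      exact ⟨⟨i, fun his ↦ Finsupp.mem_support_iff.1 hi (hms i his)⟩, rfl⟩
  rw [eq_ker]
  exact RingHom.ker_isPrime _

end MonomialIdeals

section IndependentSets

variable {V : Type*} {G : SimpleGraph V}

/-- The closed neighborhood `N[A]` of a set of vertices `A`: its complement consists of the vertices
by which an independent set `A` can still be enlarged. -/
def closedNeighborSet (G : SimpleGraph V) (A : Set V) : Set V :=
  {w | w ∈ A ∨ ∃ a ∈ A, G.Adj a w}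

theorem mem_closedNeighborSet_insert {A : Set V} {w x : V} :
    x ∈ closedNeighborSet G (insert w A) ↔ x = w ∨ G.Adj w x ∨ x ∈ closedNeighborSet G A := by
  simp only [closedNeighborSet, Set.mem_ofPred_eq, Set.mem_insert_iff, or_and_right,
    exists_or, exists_eq_left]
  tauto

theorem isIndepSet_insert {A : Set V} (hA : G.IsIndepSet A) {w : V}
    (hw : w ∉ closedNeighborSet G A) : G.IsIndepSet (insert w A) :=
  hA.insert fun a ha _ ↦
    ⟨fun h ↦ hw (Or.inr ⟨a, ha, h.symm⟩), fun h ↦ hw (Or.inr ⟨a, ha, h⟩)⟩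

theorem exists_isIndepSet_isCompleteMultipartite_induce [Finite V] (hE : G.edgeSet.Nonempty) :
    ∃ A : Finset V, G.IsIndepSet A ∧
      (∃ u ∉ closedNeighborSet G A, ∃ v ∉ closedNeighborSet G A, G.Adj u v) ∧
      (G.induce (closedNeighborSet G A)ᶜ).IsCompleteMultipartite := by
  classical
  let edgeLeaving : Set (Finset V) := {A | G.IsIndepSet A ∧
    ∃ u ∉ closedNeighborSet G A, ∃ v ∉ closedNeighborSet G A, G.Adj u v}
  have empty_mem : ∅ ∈ edgeLeaving := by
    obtain ⟨⟨u, v⟩, huv⟩ := hE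
    exact ⟨by simp, u, by simp [closedNeighborSet], v, by simp [closedNeighborSet], huv⟩
  obtain ⟨A, ⟨hA, huv⟩, hmax⟩ := edgeLeaving.toFinite.exists_maximal ⟨∅, empty_mem⟩
  refine ⟨A, hA, huv, ?_⟩
  by_contra hG
  obtain ⟨w, u, v, h⟩ := SimpleGraph.exists_isPathGraph3Compl_of_not_isCompleteMultipartite hG
  have notMem_insert (x : ↥(closedNeighborSet G A)ᶜ) (hwx : ¬ G.Adj w x) (hne : x ≠ w) :
      (x : V) ∉ closedNeighborSet G ↑(insert (w : V) A) := by
    rw [Finset.coe_insert, mem_closedNeighborSet_insert]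
    rintro (hxw | hwx' | hx)
    exacts [hne (Subtype.ext hxw), hwx hwx', x.2 hx]
  have insert_mem : insert (w : V) A ∈ edgeLeaving :=
    ⟨by simpa only [Finset.coe_insert] using isIndepSet_insert hA w.2,
      u, notMem_insert u h.not_adj_fst h.ne_fst.symm,
      v, notMem_insert v h.not_adj_snd h.ne_snd.symm, h.adj⟩
  exact w.2 (Or.inl (hmax insert_mem (Finset.subset_insert _ _) (Finset.mem_insert_self _ _)))

end IndependentSets

section EdgeIdeal

variable {K : Type} [Field K] {V : Type} {G : SimpleGraph V} {α m : V →₀ ℕ}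
  {p : MvPolynomial V K}

theorem edgeIdeal_eq_span_monomial_image : edgeIdeal K G =
    Ideal.span ((fun m ↦ monomial m (1 : K)) ''
      ((fun e : V × V ↦ Finsupp.single e.1 1 + Finsupp.single e.2 1) ''
        {e | G.Adj e.1 e.2})) := by
  rw [edgeIdeal]
  congr 1
  ext p
  simp [X, monomial_mul, eq_comm]

theorem exists_hasProjectiveDimensionLE_quotient_edgeIdeal [Finite V] :
    ∃ d, HasProjectiveDimensionLE
      (ModuleCat.of (MvPolynomial V K) (MvPolynomial V K ⧸ edgeIdeal K G)) d := by
  have := hasProjectiveDimensionLE_quotient_span_monomial_image (R := K)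
    (Set.toFinite {e : V × V | G.Adj e.1 e.2}).toFinset
    fun e ↦ Finsupp.single e.1 1 + Finsupp.single e.2 1
  rw [Set.Finite.coe_toFinset, ← edgeIdeal_eq_span_monomial_image] at this
  exact ⟨_, this⟩

theorem mem_edgeIdeal_iff :
    p ∈ edgeIdeal K G ↔ ∀ m ∈ p.support, ∃ u v, G.Adj u v ∧ m u ≠ 0 ∧ m v ≠ 0 := by
  have single_add_single_le_iff {u v : V} (huv : u ≠ v) (m : V →₀ ℕ) :
      Finsupp.single u 1 + Finsupp.single v 1 ≤ m ↔ m u ≠ 0 ∧ m v ≠ 0 := by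
    classical
    simp only [← Nat.one_le_iff_ne_zero]
    constructor
    · intro h
      exact ⟨by simpa [huv] using h u, by simpa [huv] using h v⟩
    · rintro ⟨hu, hv⟩ w
      simp only [Finsupp.add_apply, Finsupp.single_apply]
      grind
  rw [edgeIdeal_eq_span_monomial_image, mem_ideal_span_monomial_image]
  simp only [Set.exists_mem_image, Prod.exists, Set.mem_ofPred_eq]
  refine forall₂_congr fun m _ ↦ exists₂_congr fun u v ↦ and_congr_right fun huv ↦ ?_
  exact single_add_single_le_iff huv.ne m

theorem coeff_eq_zero_of_mem_edgeIdeal (hm : G.IsIndepSet (m.support : Set V))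
    (hp : p ∈ edgeIdeal K G) : coeff m p = 0 := by
  by_contra h
  obtain ⟨u, v, huv, hu, hv⟩ := mem_edgeIdeal_iff.1 hp m (mem_support_iff.2 h)
  exact hm (by simpa using hu) (by simpa using hv) huv.ne huv

theorem coeff_eq_zero_of_X_mul_mem_edgeIdeal (hα : G.IsIndepSet (α.support : Set V)) {w : V}
    (hw : w ∉ closedNeighborSet G α.support) (h : X w * p ∈ edgeIdeal K G) :
    coeff α p = 0 := by
  classical
  rw [← coeff_X_mul α w p]
  refine coeff_eq_zero_of_mem_edgeIdeal ((isIndepSet_insert hα hw).mono ?_) h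
  rw [← Finset.coe_insert, Finset.insert_eq]
  exact Finset.coe_subset.2 (Finsupp.support_add.trans
    (Finset.union_subset_union_left Finsupp.support_single_subset))

theorem mul_monomial_mem_edgeIdeal {S T : Set V} (hS : Disjoint S α.support)
    (hT : Disjoint T α.support)
    (hST : ∀ x ∈ S \ closedNeighborSet G α.support, ∀ y ∈ T \ closedNeighborSet G α.support,
      G.Adj x y)
    (hp : p ∈ Ideal.span (X '' S) ⊓ Ideal.span (X '' T)) :
    p * monomial α 1 ∈ edgeIdeal K G := by
  rw [mem_edgeIdeal_iff]
  intro m hm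
  rw [mem_support_iff, coeff_mul_monomial', mul_one, ite_ne_right_iff] at hm
  obtain ⟨hαm, hm⟩ := hm
  obtain ⟨x, hx, hmx⟩ := mem_ideal_span_X_image.1 hp.1 (m - α) (mem_support_iff.2 hm)
  obtain ⟨y, hy, hmy⟩ := mem_ideal_span_X_image.1 hp.2 (m - α) (mem_support_iff.2 hm)
  have ne_zero_of_sub {z : V} (hz : (m - α) z ≠ 0) : m z ≠ 0 := by
    rw [Finsupp.tsub_apply] at hz
    omega
  have ne_zero_of_mem {a : V} (ha : a ∈ α.support) : m a ≠ 0 :=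
    ((Nat.pos_of_ne_zero (Finsupp.mem_support_iff.1 ha)).trans_le (hαm a)).ne'
  by_cases hxN : x ∈ closedNeighborSet G α.support
  · obtain ⟨a, ha, hax⟩ := hxN.resolve_left (hS.notMem_of_mem_left hx)
    exact ⟨a, x, hax, ne_zero_of_mem ha, ne_zero_of_sub hmx⟩
  by_cases hyN : y ∈ closedNeighborSet G α.support
  · obtain ⟨a, ha, hay⟩ := hyN.resolve_left (hT.notMem_of_mem_left hy)
    exact ⟨a, y, hay, ne_zero_of_mem ha, ne_zero_of_sub hmy⟩
  exact ⟨x, y, hST x ⟨hx, hxN⟩ y ⟨hy, hyN⟩, ne_zero_of_sub hmx, ne_zero_of_sub hmy⟩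

theorem card_le_of_hasProjectiveDimensionLE_quotient_edgeIdeal [Fintype V] {A : Finset V}
    (hA : G.IsIndepSet (A : Set V)) {U : Set V}
    (hU : ∀ x ∈ U \ closedNeighborSet G A, ∀ y ∈ Uᶜ \ closedNeighborSet G A, G.Adj x y)
    {u v : V} (hu : u ∈ U \ closedNeighborSet G A) (hv : v ∈ Uᶜ \ closedNeighborSet G A) {d : ℕ}
    (hd : HasProjectiveDimensionLE
      (ModuleCat.of (MvPolynomial V K) (MvPolynomial V K ⧸ edgeIdeal K G)) d) :
    Fintype.card V ≤ A.card + d + 1 := by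
  classical
  by_contra! hlt
  obtain ⟨α, rfl⟩ : ∃ α : V →₀ ℕ, α.support = A := ⟨Multiset.toFinsupp A.val, by simp⟩
  let S : Set V := (α.support : Set V)ᶜ
  let P : Ideal (MvPolynomial V K) := Ideal.span (X '' (S ∩ U))
  let Q : Ideal (MvPolynomial V K) := Ideal.span (X '' (S \ U))
  have mem_sup : ∀ r ∈ α.supportᶜ.toList.map (X : V → MvPolynomial V K), r ∈ P ⊔ Q := by
    rw [← Ideal.span_union, ← Set.image_union, Set.inter_union_sdiff, List.forall_mem_map]
    exact fun w hw ↦ Ideal.subset_span ⟨w, by simpa [S] using hw, rfl⟩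
  have agree_on_inf : ∀ r ∈ P ⊓ Q,
      r • Ideal.Quotient.mk (edgeIdeal K G) (monomial α 1) = r • 0 := by
    intro r hr
    refine (Ideal.Quotient.eq_zero_iff_mem.2 ?_).trans (smul_zero r).symm
    exact mul_monomial_mem_edgeIdeal (disjoint_compl_left.mono_left Set.inter_subset_left)
      (disjoint_compl_left.mono_left Set.sdiff_subset)
      (fun x hx y hy ↦ hU x ⟨hx.1.2, hx.2⟩ y ⟨hy.1.2, hy.2⟩) hr
  obtain ⟨m, hmP, hmQ⟩ := exists_glue_of_hasProjectiveDimensionLE hd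
    (isWeaklyRegular_map_X α.supportᶜ.nodup_toList) mem_sup
    (by rw [List.length_map, Finset.length_toList, Finset.card_compl]; omega) agree_on_inf
  obtain ⟨p, rfl⟩ := Ideal.Quotient.mk_surjective m
  have X_u_mul_mem : X u * (p - monomial α 1) ∈ edgeIdeal K G := by
    rw [← Ideal.Quotient.eq_zero_iff_mem, mul_sub, map_sub, map_mul, map_mul, sub_eq_zero]
    exact hmP (X u) (Ideal.subset_span ⟨u, ⟨fun h ↦ hu.2 (Or.inl h), hu.1⟩, rfl⟩)
  have X_v_mul_mem : X v * p ∈ edgeIdeal K G := by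
    rw [← Ideal.Quotient.eq_zero_iff_mem, map_mul]
    exact (hmQ (X v) (Ideal.subset_span ⟨v, ⟨fun h ↦ hv.2 (Or.inl h), hv.1⟩, rfl⟩)).trans
      (smul_zero _)
  have coeff_sub_eq_zero := coeff_eq_zero_of_X_mul_mem_edgeIdeal hA hu.2 X_u_mul_mem
  rw [coeff_sub, coeff_monomial, if_pos rfl,
    coeff_eq_zero_of_X_mul_mem_edgeIdeal hA hv.2 X_v_mul_mem] at coeff_sub_eq_zero
  simp at coeff_sub_eq_zero

end EdgeIdeal

section CoverIdeal

variable {K : Type} [Field K] {V : Type} {G : SimpleGraph V}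

theorem mul_prod_X_mem_coverIdeal_iff {S : Finset V} {p : MvPolynomial V K} :
    p * ∏ w ∈ S, X w ∈ coverIdeal K G ↔
      ∀ a b, G.Adj a b → a ∉ S → b ∉ S → p ∈ Ideal.span {X a, X b} := by
  simp only [coverIdeal, Ideal.mem_iInf]
  refine forall₃_congr fun a b _ ↦ ?_
  have hprime : (Ideal.span {(X a : MvPolynomial V K), X b}).IsPrime := by
    simpa only [Set.image_pair] using isPrime_span_X_image (R := K) {a, b}
  have X_mem_iff (w : V) : (X w : MvPolynomial V K) ∈ Ideal.span {X a, X b} ↔ w = a ∨ w = b := by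
    rw [← Set.image_pair, X_mem_span_X_image_iff, Set.mem_insert_iff, Set.mem_singleton_iff]
  rw [hprime.mul_mem_iff_mem_or_mem, hprime.prod_mem_iff]
  simp only [X_mem_iff]
  grind

theorem vNumber_coverIdeal_le_card {S : Finset V} {u v : V}
    (hS : ∀ a b, G.Adj a b ∧ a ∉ S ∧ b ∉ S ↔ s(a, b) = s(u, v)) :
    vNumber (coverIdeal K G) ≤ S.card := by
  refine Nat.sInf_le ⟨∏ w ∈ S, X w, ?_, ?_⟩
  · simpa using IsHomogeneous.prod S _ (fun _ ↦ 1) fun w _ ↦ isHomogeneous_X K w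
  · have colon_eq : (coverIdeal K G).colon (Ideal.span {∏ w ∈ S, (X w : MvPolynomial V K)}) =
        Ideal.span (X '' {u, v}) := by
      ext p
      rw [Ideal.mem_colon_span_singleton, mul_prod_X_mem_coverIdeal_iff, Set.image_pair]
      constructor
      · intro h
        obtain ⟨huv, hu, hv⟩ := (hS u v).2 rfl
        exact h u v huv hu hv
      · intro hp a b hab ha hb
        obtain ⟨rfl, rfl⟩ | ⟨rfl, rfl⟩ := Sym2.eq_iff.1 ((hS a b).1 ⟨hab, ha, hb⟩)
        · exact hp
        · rwa [Set.pair_comm]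
    rw [colon_eq]
    exact isPrime_span_X_image {u, v}

theorem vNumber_coverIdeal_add_card_add_two_le [Fintype V] {A : Finset V}
    (hA : G.IsIndepSet (A : Set V)) {u v : V} (hu : u ∉ closedNeighborSet G A)
    (hv : v ∉ closedNeighborSet G A) (huv : G.Adj u v) :
    vNumber (coverIdeal K G) + A.card + 2 ≤ Fintype.card V := by
  classical
  have hvA : v ∉ A := fun h ↦ hv (Or.inl h)
  have huA : u ∉ insert v A := by
    rw [Finset.mem_insert, not_or]
    exact ⟨huv.ne, fun h ↦ hu (Or.inl h)⟩
  have unique_edge (a b : V) : G.Adj a b ∧ a ∉ (insert u (insert v A))ᶜ ∧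
      b ∉ (insert u (insert v A))ᶜ ↔ s(a, b) = s(u, v) := by
    have not_adj {a b : V} (ha : a ∈ A) (hb : b = u ∨ b = v ∨ b ∈ A) : ¬ G.Adj a b := by
      intro hab
      obtain rfl | rfl | hb := hb
      exacts [hu (Or.inr ⟨a, ha, hab⟩), hv (Or.inr ⟨a, ha, hab⟩), hA ha hb hab.ne hab]
    simp only [Finset.mem_compl, not_not, Finset.mem_insert, Sym2.eq_iff]
    grind [SimpleGraph.adj_comm, SimpleGraph.irrefl]
  have := vNumber_coverIdeal_le_card (K := K) unique_edge
  have := Finset.card_add_card_compl (insert u (insert v A))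
  rw [Finset.card_insert_of_notMem huA, Finset.card_insert_of_notMem hvA] at this
  omega

end CoverIdeal

theorem vNumber_coverIdeal_le_projDim_sub_one_general {K : Type} [Field K] {V : Type} [Finite V]
    (G : SimpleGraph V) (hE : G.edgeSet.Nonempty) :
    vNumber (coverIdeal K G) + 1 ≤ projDim (MvPolynomial V K)
      (ModuleCat.of (MvPolynomial V K) (MvPolynomial V K ⧸ edgeIdeal K G)) := by
  have := Fintype.ofFinite V
  obtain ⟨A, hA, ⟨u, hu, v, hv, huv⟩, hmultipartite⟩ :=
    exists_isIndepSet_isCompleteMultipartite_induce hE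
  obtain ⟨d, hd⟩ := exists_hasProjectiveDimensionLE_quotient_edgeIdeal (K := K) (G := G)
  have hjoin : ∀ x ∈ {w | ¬ G.Adj u w} \ closedNeighborSet G A,
      ∀ y ∈ {w | ¬ G.Adj u w}ᶜ \ closedNeighborSet G A, G.Adj x y := by
    rintro x ⟨hux, hx⟩ y ⟨huy, hy⟩
    by_contra hxy
    exact huy (hmultipartite.trans ⟨u, hu⟩ ⟨x, hx⟩ ⟨y, hy⟩ hux hxy)
  have vNumber_le := vNumber_coverIdeal_add_card_add_two_le (K := K) hA hu hv huv
  have card_le := card_le_of_hasProjectiveDimensionLE_quotient_edgeIdeal hA hjoin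
    ⟨G.irrefl, hu⟩ ⟨not_not.2 huv, hv⟩ (hasProjectiveDimensionLE_projDim hd)
  omega

/-- For every finite simple graph `G` with at least one edge,
`v(J(G)) ≤ pd(R/I(G)) - 1`. -/
theorem vNumber_coverIdeal_le_projDim_sub_one
    {K : Type} [Field K] {n : ℕ} (hn : 1 ≤ n) (G : SimpleGraph (Fin n))
    (hE : G.edgeSet.Nonempty) :
    vNumber (coverIdeal K G) ≤
      projDim (MvPolynomial (Fin n) K)
        (ModuleCat.of (MvPolynomial (Fin n) K)
          (MvPolynomial (Fin n) K ⧸ edgeIdeal K G)) - 1 :=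
  Nat.le_sub_of_add_le (vNumber_coverIdeal_le_projDim_sub_one_general G hE)

end
end

section
/- Let G be a finite simple graph on n vertices with at least one edge. Then R/I(G) is Cohen–Macaulay (i.e. depth(R/I(G)) equals the Krull dimension of R/I(G)) if and only if v(J(G)) = pd_R(R/I(G)) − 1 = α₀(G) − 1, where α₀(G) is the minimum cardinality of a vertex cover of G. (By Terai's formula, pd_R(R/I(G)) − 1 = reg(R/J(G)).) -/
open MvPolynomial CategoryTheory

noncomputable section

/-!
Localizing at the homogeneous maximal ideal gives the Auslander–Buchsbaum formula for graded
quotients of `R = K[x_v : v ∈ V]`. Since `dim R/I(G) = |V| - α₀(G)`, the quotient `R/I(G)` is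
Cohen–Macaulay if and only if `pd R/I(G) = α₀(G)`.

If `J(G) : f` is prime, then it contains a variable `x_u`, and `x_u f ∈ J(G)` has degree at least
`α₀(G)`; hence `v(J(G)) ≥ α₀(G) - 1`. For the converse inequality when `pd R/I(G) ≤ α₀(G)`, let
`U = C ∪ C'` be minimal among the unions of two distinct minimal vertex covers. Any two minimal
vertex covers inside `U` then have union `U`, so in the localization at `(x_v : v ∈ U)` the
Mayer–Vietoris sequence of `(x_v : v ∈ C)` and the intersection of the other primes has residue
field as last term. This forces `pd R/I(G) ≥ |U| - 1`, so `C` and `C'` have cardinality `α₀(G)` and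
share a set `A` of `α₀(G) - 1` vertices. An edge `{u, v}` missed by `A` gives
`J(G) : ∏_{a ∈ A} x_a = (x_u, x_v)`, hence `v(J(G)) ≤ α₀(G) - 1`.
-/

section LocalProjDim

universe u

/-- The localization of the module `M` at the prime ideal `p` has projective dimension less than
`d`, with the zero module having projective dimension less than `0`. -/
def LocalProjDimLT {R : Type u} [CommRing R] (p : Ideal R) [p.IsPrime] (M : Type u)
    [AddCommGroup M] [Module R M] (d : ℕ) : Prop :=
  HasProjectiveDimensionLT ((ModuleCat.of R M).localizedModule p.primeCompl) d

variable {R : Type u} [CommRing R] {M N L : Type u} [AddCommGroup M] [Module R M]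
  [AddCommGroup N] [Module R N] [AddCommGroup L] [Module R L]

lemma shortExact_ofHom {f : M →ₗ[R] N} {g : N →ₗ[R] L} (hf : Function.Injective f)
    (hg : Function.Surjective g) (hfg : Function.Exact f g) :
    (ShortComplex.mk (ModuleCat.ofHom f) (ModuleCat.ofHom g)
      (ModuleCat.hom_ext hfg.linearMap_comp_eq_zero)).ShortExact :=
  .mk' ((ShortComplex.ShortExact.moduleCat_exact_iff_function_exact _).mpr hfg)
    ((ModuleCat.mono_iff_injective _).mpr hf) ((ModuleCat.epi_iff_surjective _).mpr hg)

variable (p : Ideal R) [p.IsPrime]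

/-- The module underlying `ModuleCat.localizedModule` is the usual localized module. -/
def localizedModuleEquiv : (ModuleCat.of R M).localizedModule p.primeCompl
    ≃ₗ[Localization p.primeCompl] LocalizedModule p.primeCompl M :=
  Shrink.linearEquiv (Localization p.primeCompl) _

namespace LocalProjDimLT

variable {p} {d e : ℕ}

lemma mono (h : LocalProjDimLT p M d) (hde : d ≤ e) : LocalProjDimLT p M e :=
  haveI : HasProjectiveDimensionLT ((ModuleCat.of R M).localizedModule p.primeCompl) d := h
  hasProjectiveDimensionLT_of_ge _ d e hde

lemma congr (e : M ≃ₗ[R] N) : LocalProjDimLT p M d ↔ LocalProjDimLT p N d := by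
  let i := (ModuleCat.localizedModuleFunctor p.primeCompl).mapIso e.toModuleIso
  exact ⟨@hasProjectiveDimensionLT_of_iso _ _ _ _ _ i d,
    @hasProjectiveDimensionLT_of_iso _ _ _ _ _ i.symm d⟩

lemma of_hasProjectiveDimensionLT
    (h : HasProjectiveDimensionLT (ModuleCat.of R M) (d + 1)) : LocalProjDimLT p M (d + 1) :=
  haveI : HasProjectiveDimensionLE (ModuleCat.of R M) d := h
  ModuleCat.localizedModule_hasProjectiveDimensionLE d p.primeCompl _

lemma zero_iff : LocalProjDimLT p M 0 ↔ Subsingleton (LocalizedModule p.primeCompl M) := by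
  rw [LocalProjDimLT, hasProjectiveDimensionLT_zero_iff_isZero, ModuleCat.isZero_iff_subsingleton]
  exact (localizedModuleEquiv p).toEquiv.subsingleton_congr

lemma one_iff : LocalProjDimLT p M 1 ↔
    Module.Projective (Localization p.primeCompl) (LocalizedModule p.primeCompl M) := by
  rw [LocalProjDimLT, ← projective_iff_hasProjectiveDimensionLT_one,
    ← IsProjective.iff_projective]
  exact ⟨fun _ => .of_equiv (localizedModuleEquiv p),
    fun _ => .of_equiv (localizedModuleEquiv p).symm⟩

lemma zero_of_smul_eq_zero {s : R} (hs : s ∉ p) (h : ∀ x : M, s • x = 0) :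
    LocalProjDimLT p M 0 :=
  zero_iff.mpr (LocalizedModule.subsingleton_iff.mpr fun m => ⟨s, hs, h m⟩)

lemma quotient_zero_iff {I : Ideal R} : LocalProjDimLT p (R ⧸ I) 0 ↔ ¬ I ≤ p := by
  rw [zero_iff, LocalizedModule.subsingleton_iff]
  refine ⟨fun h hIp => ?_, fun h m => ?_⟩
  · obtain ⟨s, hs, hs1⟩ := h (Submodule.Quotient.mk 1)
    rw [← Submodule.Quotient.mk_smul, smul_eq_mul, mul_one, Submodule.Quotient.mk_eq_zero] at hs1
    exact hs (hIp hs1)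
  · obtain ⟨s, hsI, hsp⟩ := Set.not_subset.mp h
    rw [SetLike.mem_coe, ← Ideal.annihilator_quotient (I := I), Module.mem_annihilator] at hsI
    exact ⟨s, hsp, hsI m⟩

lemma of_subsingleton [Subsingleton M] : LocalProjDimLT p M d :=
  (zero_of_smul_eq_zero (p.ne_top_iff_one.mp Ideal.IsPrime.ne_top')
    fun _ => Subsingleton.elim _ _).mono d.zero_le

lemma smul_top_ne_top [Module.Finite R M] (hM : ¬ LocalProjDimLT p M 0) :
    p • (⊤ : Submodule R M) ≠ ⊤ := by
  intro h
  obtain ⟨r, hrp, hr⟩ := Submodule.exists_sub_one_mem_and_smul_eq_zero_of_fg_of_le_smul p ⊤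
    Module.Finite.fg_top h.ge
  refine hM (zero_of_smul_eq_zero (s := r) (fun hr' => ?_) fun x => hr x trivial)
  exact p.ne_top_iff_one.mp Ideal.IsPrime.ne_top' (by simpa using p.sub_mem hr' hrp)

section ShortExact

variable {f : M →ₗ[R] N} {g : N →ₗ[R] L} (hf : Function.Injective f)
  (hg : Function.Surjective g) (hfg : Function.Exact f g)
include hf hg hfg

lemma of_exact_left (hN : LocalProjDimLT p N d) (hL : LocalProjDimLT p L (d + 1)) :
    LocalProjDimLT p M d :=
  ((shortExact_ofHom hf hg hfg).map_of_exact
    (ModuleCat.localizedModuleFunctor p.primeCompl)).hasProjectiveDimensionLT_X₁ d hN hL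

lemma of_exact_middle (hM : LocalProjDimLT p M d) (hL : LocalProjDimLT p L d) :
    LocalProjDimLT p N d :=
  ((shortExact_ofHom hf hg hfg).map_of_exact
    (ModuleCat.localizedModuleFunctor p.primeCompl)).hasProjectiveDimensionLT_X₂ d hM hL

lemma of_exact_right (hM : LocalProjDimLT p M d) (hN : LocalProjDimLT p N (d + 1)) :
    LocalProjDimLT p L (d + 1) :=
  ((shortExact_ofHom hf hg hfg).map_of_exact
    (ModuleCat.localizedModuleFunctor p.primeCompl)).hasProjectiveDimensionLT_X₃ d hM hN

end ShortExact

end LocalProjDimLT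

lemma nonempty_quotSMulTop_localizedModule_equiv (S : Submonoid R) (x : R) :
    Nonempty (QuotSMulTop (algebraMap R (Localization S) x) (LocalizedModule S M)
      ≃ₗ[Localization S] LocalizedModule S (QuotSMulTop x M)) :=
  ⟨(QuotSMulTop.congr _ (LocalizedModule.equivTensorProduct S M)).trans
    ((QuotSMulTop.algebraMapTensorEquivTensorQuotSMulTop x M (Localization S)).trans
      (LocalizedModule.equivTensorProduct S _).symm)⟩

lemma isSMulRegular_quotient_of_notMem {P : Ideal R} [hP : P.IsPrime] {x : R} (hx : x ∉ P) :
    IsSMulRegular (R ⧸ P) x := by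
  rw [isSMulRegular_quotient_iff_mem_of_smul_mem]
  exact fun y hy => (hP.mem_or_mem hy).resolve_left hx

open scoped Pointwise in
/-- `(R ⧸ I) ⧸ x (R ⧸ I)` is `R ⧸ (I + (x))`. -/
def quotSMulTopQuotientEquiv (I : Ideal R) (x : R) :
    QuotSMulTop x (R ⧸ I) ≃ₗ[R] R ⧸ (I ⊔ Ideal.span {x}) :=
  have hmap : Submodule.map (Submodule.mkQ I) (I ⊔ Ideal.span {x}) =
      x • (⊤ : Submodule R (R ⧸ I)) := by
    rw [Submodule.map_sup, Submodule.mkQ_map_self, bot_sup_eq, ← Ideal.mul_top (Ideal.span {x}),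
      ← smul_eq_mul, Submodule.map_smul'', Submodule.map_top, Submodule.range_mkQ,
      Submodule.ideal_span_singleton_smul]
  (Submodule.quotEquivOfEq _ _ hmap.symm).trans
    (Submodule.quotientQuotientEquivQuotient I _ le_sup_left)

lemma LocalProjDimLT.self_iff {d : ℕ} : LocalProjDimLT p R d ↔ 0 < d := by
  have : Nontrivial (LocalizedModule p.primeCompl R) :=
    inferInstanceAs (Nontrivial (Localization.AtPrime p))
  refine ⟨fun h => ?_, fun h => LocalProjDimLT.mono (d := 1) (one_iff.mpr ?_) h⟩
  · by_contra! hd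
    obtain rfl := Nat.le_zero.mp hd
    exact not_subsingleton _ (zero_iff.mp h)
  · exact inferInstanceAs (Module.Projective _ (Localization p.primeCompl))

end LocalProjDim

section Noetherian

open RingTheory.Sequence
open scoped Pointwise

universe u

variable {R : Type u} [CommRing R] [IsNoetherianRing R] {p : Ideal R}
  {M : Type u} [AddCommGroup M] [Module R M] [Module.Finite R M] {d : ℕ}

namespace LocalProjDimLT

section Prime

variable [p.IsPrime]

lemma quotSMulTop_iff {x : R} (hxp : x ∈ p) (hx : IsSMulRegular M x) :
    LocalProjDimLT p (QuotSMulTop x M) (d + 1) ↔ LocalProjDimLT p M d := by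
  let A := Localization p.primeCompl
  have : IsLocalRing A := inferInstanceAs (IsLocalRing (Localization.AtPrime p))
  have : IsNoetherianRing A := IsLocalization.isNoetherianRing p.primeCompl A ‹_›
  have hmax : algebraMap R A x ∈ IsLocalRing.maximalIdeal A :=
    (IsLocalization.AtPrime.to_map_mem_maximal_iff (Localization.AtPrime p) p x).mpr hxp
  have hreg : IsSMulRegular (LocalizedModule p.primeCompl M) (algebraMap R A x) :=
    hx.of_isLocalizedModule A p.primeCompl (LocalizedModule.mkLinearMap p.primeCompl M)
  obtain ⟨e⟩ := nonempty_quotSMulTop_localizedModule_equiv (M := M) p.primeCompl x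
  have hsucc : projectiveDimension ((ModuleCat.of R (QuotSMulTop x M)).localizedModule
        p.primeCompl) =
      projectiveDimension ((ModuleCat.of R M).localizedModule p.primeCompl) + 1 :=
    calc
      _ = projectiveDimension (ModuleCat.of A
            (QuotSMulTop (algebraMap R A x) (LocalizedModule p.primeCompl M))) :=
        projectiveDimension_eq_of_iso ((localizedModuleEquiv p).trans e.symm).toModuleIso
      _ = projectiveDimension (ModuleCat.of A (LocalizedModule p.primeCompl M)) + 1 :=
        ModuleCat.projectiveDimension_quotSMulTop_eq_succ_of_isSMulRegular
          (ModuleCat.of A (LocalizedModule p.primeCompl M)) _ hreg hmax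
      _ = _ := by
        rw [projectiveDimension_eq_of_iso (localizedModuleEquiv (M := M) p).symm.toModuleIso]
  rw [LocalProjDimLT, LocalProjDimLT, ← projectiveDimension_lt_iff,
    ← projectiveDimension_lt_iff, hsucc, Nat.cast_add_one]
  exact lt_iff_lt_of_le_iff_le ENat.WithBot.add_le_add_one_right_iff

lemma of_forall_quotient_prime (h : ∀ P : Ideal R, P.IsPrime → Module.annihilator R M ≤ P →
    LocalProjDimLT p (R ⧸ P) d) : LocalProjDimLT p M d := by
  induction ‹Module.Finite R M› using
    IsNoetherianRing.induction_on_isQuotientEquivQuotientPrime with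
  | subsingleton N => exact of_subsingleton
  | quotient N q e =>
    refine (congr e).mpr (h q.1 q.2 ?_)
    rw [e.annihilator_eq, Ideal.annihilator_quotient]
  | exact N₁ N₂ N₃ f g hf hg hfg ih₁ ih₃ =>
    exact of_exact_middle hf hg hfg
      (ih₁ fun P hP hle => h P hP ((f.annihilator_le_of_injective hf).trans hle))
      (ih₃ fun P hP hle => h P hP ((g.annihilator_le_of_surjective hg).trans hle))

/- A prime `P < p` is replaced by larger primes: for `x ∈ p \ P`, killing the nonzerodivisor `x`
on `R ⧸ P` raises the projective dimension by one. -/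
lemma quotient_prime_of_residueField (hp : LocalProjDimLT p (R ⧸ p) (d + 1)) (P : Ideal R)
    (hP : P.IsPrime) : LocalProjDimLT p (R ⧸ P) (d + 1) := by
  induction P using WellFoundedGT.induction with
  | ind P ih =>
  by_cases hle : P ≤ p
  · obtain rfl | hlt := hle.eq_or_lt
    · exact hp
    · obtain ⟨x, hxp, hxP⟩ := Set.exists_of_ssubset hlt
      refine mono ((quotSMulTop_iff hxp (isSMulRegular_quotient_of_notMem hxP)).mp ?_) d.le_succ
      refine of_forall_quotient_prime fun Q hQ hQle => ih Q ?_ hQ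
      have hPQ : P ≤ Q := calc
        P = Module.annihilator R (R ⧸ P) := Ideal.annihilator_quotient.symm
        _ ≤ Module.annihilator R (QuotSMulTop x (R ⧸ P)) :=
          LinearMap.annihilator_le_of_surjective _ (Submodule.mkQ_surjective _)
        _ ≤ Q := hQle
      exact SetLike.lt_iff_le_and_exists.mpr
        ⟨hPQ, x, hQle (QuotSMulTop.mem_annihilator _ x), hxP⟩
  · exact (quotient_zero_iff.mpr hle).mono (Nat.zero_le _)

lemma of_residueField (hp : LocalProjDimLT p (R ⧸ p) (d + 1)) : LocalProjDimLT p M (d + 1) :=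
  of_forall_quotient_prime fun P hP _ => quotient_prime_of_residueField hp P hP

lemma quotient_isWeaklyRegular_iff {rs : List R} (hrs : ∀ r ∈ rs, r ∈ p)
    (hreg : IsWeaklyRegular M rs) :
    LocalProjDimLT p (M ⧸ (Ideal.ofList rs • (⊤ : Submodule R M))) (d + rs.length) ↔
      LocalProjDimLT p M d := by
  induction rs generalizing M d with
  | nil => exact congr (Submodule.quotEquivOfEqBot _ (by simp))
  | cons r rs ih =>
    rw [isWeaklyRegular_cons_iff] at hreg
    rw [congr (Submodule.quotOfListConsSMulTopEquivQuotSMulTopInner M r rs), List.length_cons,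
      add_comm rs.length, ← add_assoc, ih (fun r hr => hrs r (List.mem_cons_of_mem _ hr)) hreg.2,
      quotSMulTop_iff (hrs r List.mem_cons_self) hreg.1]

lemma length_le_of_isWeaklyRegular {D : ℕ} (hres : LocalProjDimLT p (R ⧸ p) (D + 1))
    (hM : ¬ LocalProjDimLT p M 0) {rs : List R} (hrs : ∀ r ∈ rs, r ∈ p)
    (hreg : IsWeaklyRegular M rs) : rs.length ≤ D := by
  by_contra! hlt
  exact hM ((quotient_isWeaklyRegular_iff hrs hreg).mp ((of_residueField hres).mono (by omega)))

lemma iff_of_mem_associatedPrimes {D : ℕ} (hres : ∀ d, LocalProjDimLT p (R ⧸ p) d ↔ D < d)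
    (hp : p ∈ associatedPrimes R M) : LocalProjDimLT p M d ↔ D < d := by
  have hbound : LocalProjDimLT p (R ⧸ p) (D + 1) := (hres _).mpr D.lt_succ_self
  refine ⟨fun h => ?_, fun h => (of_residueField hbound).mono h⟩
  by_contra! hle
  obtain ⟨f, hf⟩ := ((isAssociatedPrime_iff_exists_injective_linearMap p M).mp hp).2
  have hD : LocalProjDimLT p (R ⧸ p) D := of_exact_left hf (Submodule.mkQ_surjective _)
    (LinearMap.exact_map_mkQ_range f) (h.mono hle) (of_residueField hbound)
  exact lt_irrefl D ((hres D).mp hD)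

end Prime

end LocalProjDimLT

lemma mem_associatedPrimes_of_forall_not_isSMulRegular [hp : p.IsMaximal]
    (h : ∀ x ∈ p, ¬ IsSMulRegular M x) : p ∈ associatedPrimes R M := by
  have hsub : (p : Set R) ⊆ ⋃ P ∈ associatedPrimes R M, (P : Set R) := by
    rw [biUnion_associatedPrimes_eq_compl_regular]
    exact h
  rw [Ideal.subset_union_prime_finite (associatedPrimes.finite R M) ⊥ ⊥
    fun P hP _ _ => hP.isPrime] at hsub
  obtain ⟨P, hP, hpP⟩ := hsub
  rwa [hp.eq_of_le hP.isPrime.ne_top hpP]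

end Noetherian

section Depth

open RingTheory.Sequence
open scoped Pointwise

variable {R : Type} [CommRing R] {p : Ideal R} {M : Type} [AddCommGroup M] [Module R M]

lemma isRegular_of_isWeaklyRegular_of_forall_mem (hp : p • (⊤ : Submodule R M) ≠ ⊤) {rs : List R}
    (hrs : ∀ r ∈ rs, r ∈ p) (hreg : IsWeaklyRegular M rs) : IsRegular M rs :=
  ⟨hreg, fun h => hp (top_le_iff.mp
    (h.le.trans (Submodule.smul_mono_left (Ideal.span_le.mpr hrs))))⟩

lemma exists_isWeaklyRegular_length_eq_mdepth (hp : p • (⊤ : Submodule R M) ≠ ⊤) {D : ℕ}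
    (hD : ∀ rs : List R, (∀ r ∈ rs, r ∈ p) → IsWeaklyRegular M rs → rs.length ≤ D) :
    ∃ rs : List R, rs.length = mdepth p M ∧ (∀ r ∈ rs, r ∈ p) ∧ IsWeaklyRegular M rs ∧
      ∀ x ∈ p, ¬ IsSMulRegular (M ⧸ (Ideal.ofList rs • (⊤ : Submodule R M))) x := by
  have hbdd : BddAbove {k | ∃ rs : List R, rs.length = k ∧ (∀ r ∈ rs, r ∈ p) ∧ IsRegular M rs} :=
    ⟨D, by rintro _ ⟨rs, rfl, hrs, hreg⟩; exact hD rs hrs hreg.1⟩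
  obtain ⟨rs, hlen, hrs, hreg⟩ : mdepth p M ∈ _ := Nat.sSup_mem
    ⟨0, [], rfl, by simp, isRegular_of_isWeaklyRegular_of_forall_mem hp (by simp) (.nil R M)⟩ hbdd
  refine ⟨rs, hlen, hrs, hreg.1, fun x hx hxreg => ?_⟩
  have hmem : ∀ r ∈ rs ++ [x], r ∈ p := by
    simpa [or_imp, forall_and, hx] using hrs
  have hlong : (rs ++ [x]).length ≤ rs.length := hlen ▸ le_csSup hbdd
    ⟨_, rfl, hmem, isRegular_of_isWeaklyRegular_of_forall_mem hp hmem
      ((isWeaklyRegular_append_iff _ _ _).mpr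
        ⟨hreg.1, (isWeaklyRegular_singleton_iff _ _).mpr hxreg⟩)⟩
  simp at hlong

/-- The **Auslander–Buchsbaum formula**, for a maximal ideal whose residue field has local
projective dimension `D`. -/
theorem localProjDimLT_iff_lt_add_mdepth [IsNoetherianRing R] [p.IsMaximal]
    [Module.Finite R M] {D : ℕ}
    (hres : ∀ d, LocalProjDimLT p (R ⧸ p) d ↔ D < d) (hM : ¬ LocalProjDimLT p M 0) (d : ℕ) :
    LocalProjDimLT p M d ↔ D < d + mdepth p M := by
  obtain ⟨rs, hlen, hrs, hreg, hmax⟩ := exists_isWeaklyRegular_length_eq_mdepth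
    (LocalProjDimLT.smul_top_ne_top hM) fun rs hrs hreg =>
      LocalProjDimLT.length_le_of_isWeaklyRegular ((hres _).mpr D.lt_succ_self) hM hrs hreg
  rw [← LocalProjDimLT.quotient_isWeaklyRegular_iff hrs hreg,
    LocalProjDimLT.iff_of_mem_associatedPrimes hres
      (mem_associatedPrimes_of_forall_not_isSMulRegular hmax), hlen]

end Depth

section Ext

universe u

variable {R : Type u} [CommRing R] {M N : ModuleCat.{u} R}

lemma subsingleton_ext_succ_iff (P : ProjectiveResolution M) (j : ℕ) :
    Subsingleton (((Ext R (ModuleCat.{u} R) (j + 1)).obj (Opposite.op M)).obj N) ↔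
      ∀ f : P.complex.X (j + 1) ⟶ N, P.complex.d (j + 2) (j + 1) ≫ f = 0 →
        ∃ g : P.complex.X j ⟶ N, P.complex.d (j + 1) j ≫ g = f := by
  rw [← ModuleCat.isZero_iff_subsingleton, (P.isoExt (R := R) (j + 1) N).isZero_iff,
    ← HomologicalComplex.exactAt_iff_isZero_homology,
    HomologicalComplex.exactAt_iff' _ j (j + 1) (j + 2) (by simp) (by simp),
    ShortComplex.moduleCat_exact_iff]
  rfl

lemma subsingleton_abelianExt_succ_iff_s10 (P : ProjectiveResolution M) (j : ℕ) :
    Subsingleton (Abelian.Ext.{u} M N (j + 1)) ↔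
      ∀ f : P.complex.X (j + 1) ⟶ N, P.complex.d (j + 2) (j + 1) ≫ f = 0 →
        ∃ g : P.complex.X j ⟶ N, P.complex.d (j + 1) j ≫ g = f := by
  refine ⟨fun _ f hf => (P.extMk_eq_zero_iff f (j + 2) rfl hf j rfl).mp (Subsingleton.elim _ _),
    fun h => subsingleton_of_forall_eq 0 fun α => ?_⟩
  obtain ⟨f, hf, rfl⟩ := P.extMk_surjective α (j + 2) rfl
  exact (P.extMk_eq_zero_iff f (j + 2) rfl hf j rfl).mpr (h f hf)

variable (M) in
lemma hasProjectiveDimensionLT_succ_iff_subsingleton_ext (d : ℕ) :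
    HasProjectiveDimensionLT M (d + 1) ↔ ∀ (N : ModuleCat.{u} R) (i : ℕ), d < i →
      Subsingleton (((Ext R (ModuleCat.{u} R) i).obj (Opposite.op M)).obj N) := by
  let P := ProjectiveResolution.of M
  refine ⟨fun _ N i hi => ?_, fun h => HasProjectiveDimensionLT.mk.{u} fun i hi N e => ?_⟩ <;>
    obtain ⟨j, rfl⟩ := Nat.exists_eq_add_one.mpr (d.zero_le.trans_lt hi)
  · rw [subsingleton_ext_succ_iff P, ← subsingleton_abelianExt_succ_iff_s10 P]
    exact HasProjectiveDimensionLT.subsingleton.{u} M (d + 1) (j + 1) hi N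
  · have := (subsingleton_abelianExt_succ_iff_s10 P j).mpr
      ((subsingleton_ext_succ_iff P j).mp (h N (j + 1) hi))
    exact Subsingleton.elim _ _

lemma projDim_eq_sInf_hasProjectiveDimensionLT {R : Type} [CommRing R] (M : ModuleCat.{0} R) :
    projDim R M = sInf {d : ℕ | HasProjectiveDimensionLT M (d + 1)} := by
  simp only [projDim, hasProjectiveDimensionLT_succ_iff_subsingleton_ext]

end Ext

section VarIdeal

lemma ker_killCompl {R σ τ : Type*} [CommRing R] {f : σ → τ} (hf : Function.Injective f) :
    RingHom.ker (killCompl (R := R) hf) = Ideal.span (X '' (Set.range f)ᶜ) := by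
  refine le_antisymm (fun q hq => ?_) (Ideal.span_le.mpr ?_)
  · have hcomp : ((Ideal.Quotient.mkₐ R (Ideal.span (X '' (Set.range f)ᶜ))).comp
        (rename f)).comp (killCompl hf) = Ideal.Quotient.mkₐ R _ := by
      ext t
      by_cases ht : t ∈ Set.range f
      · obtain ⟨s, rfl⟩ := ht
        have hX : killCompl hf (X (f s) : MvPolynomial τ R) = X s := by
          rw [← rename_X, killCompl_rename_app]
        simp [hX]
      · have hX : (X t : MvPolynomial τ R) ∈ Ideal.span (X '' (Set.range f)ᶜ) :=
          Ideal.subset_span ⟨t, ht, rfl⟩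
        simpa [killCompl, ht] using (Ideal.Quotient.eq_zero_iff_mem.mpr hX).symm
    have hq' := DFunLike.congr_fun hcomp q
    rw [AlgHom.comp_apply, RingHom.mem_ker.mp hq, map_zero] at hq'
    exact Ideal.Quotient.eq_zero_iff_mem.mp hq'.symm
  · rintro _ ⟨t, ht, rfl⟩
    simp_all [RingHom.mem_ker, killCompl]

variable (K : Type*) {V : Type*} [Field K]

/-- The ideal of `K[x_v : v ∈ V]` generated by the variables `x_v` with `v ∈ S`. -/
def varIdeal (S : Set V) : Ideal (MvPolynomial V K) :=
  Ideal.span (X '' S)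

variable {K} {S T : Set V}

lemma varIdeal_le_iff {I : Ideal (MvPolynomial V K)} : varIdeal K S ≤ I ↔ ∀ v ∈ S, X v ∈ I := by
  simp [varIdeal, Ideal.span_le, Set.subset_def]

lemma X_mem_varIdeal {v : V} : (X v : MvPolynomial V K) ∈ varIdeal K S ↔ v ∈ S := by
  classical simp [varIdeal, mem_ideal_span_X_image, support_X, Finsupp.single_apply]

lemma varIdeal_mono : varIdeal K S ≤ varIdeal K T ↔ S ⊆ T := by
  simp_rw [varIdeal_le_iff, X_mem_varIdeal, Set.subset_def]

lemma varIdeal_sup (S T : Set V) : varIdeal K S ⊔ varIdeal K T = varIdeal K (S ∪ T) := by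
  rw [varIdeal, varIdeal, varIdeal, Set.image_union, Ideal.span_union]

variable (K S) in
/-- Killing the variables in `S` identifies `K[x_v : v ∈ V] / (x_v : v ∈ S)` with the polynomial
ring in the remaining variables. -/
def quotientVarIdealEquiv :
    (MvPolynomial V K ⧸ varIdeal K S) ≃ₐ[K] MvPolynomial (Sᶜ : Set V) K :=
  (Ideal.quotientEquivAlgOfEq K
    (by rw [ker_killCompl, Subtype.range_coe, compl_compl, varIdeal])).trans
    (Ideal.quotientKerAlgEquivOfSurjective (f := killCompl (Subtype.val_injective (p := (· ∈ Sᶜ))))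
      fun q => ⟨_, killCompl_rename_app _ q⟩)

instance varIdeal_isPrime : (varIdeal K S).IsPrime :=
  (Ideal.Quotient.isDomain_iff_prime _).mp
    (quotientVarIdealEquiv K S).toMulEquiv.isDomain

lemma ringKrullDim_quotient_varIdeal [Finite V] :
    ringKrullDim (MvPolynomial V K ⧸ varIdeal K S) = (Nat.card V - S.ncard : ℕ) := by
  rw [ringKrullDim_eq_of_ringEquiv (quotientVarIdealEquiv K S).toRingEquiv,
    MvPolynomial.ringKrullDim_of_isNoetherianRing, ringKrullDim_eq_zero_of_field,
    ← Set.ncard_compl, ← Nat.card_coe_set_eq, zero_add]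

lemma sup_span_X_eq_varIdeal_insert (S : Set V) (v : V) :
    varIdeal K S ⊔ Ideal.span {X v} = varIdeal K (insert v S) := by
  rw [varIdeal, varIdeal, Set.image_insert_eq, Ideal.span_insert, sup_comm]

end VarIdeal

section VarIdealProjDim

universe u

variable {K V : Type u} [Field K] [Finite V] {S U : Set V}

/- Each variable of `S` is a nonzerodivisor modulo the previous ones. -/
lemma localProjDimLT_quotient_varIdeal_iff (hSU : S ⊆ U) {d : ℕ} :
    LocalProjDimLT (varIdeal K U) (MvPolynomial V K ⧸ varIdeal K S) d ↔ S.ncard < d := by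
  induction S, S.toFinite using Set.Finite.induction_on generalizing d with
  | empty =>
    rw [LocalProjDimLT.congr (Submodule.quotEquivOfEqBot _ (by simp [varIdeal])),
      LocalProjDimLT.self_iff, Set.ncard_empty]
  | @insert v S hv _ ih =>
    replace ih := fun d => @ih ((Set.subset_insert v S).trans hSU) d
    have hvU : X v ∈ varIdeal K U := X_mem_varIdeal.mpr (hSU (Set.mem_insert v S))
    have hreg := isSMulRegular_quotient_of_notMem (mt (X_mem_varIdeal (K := K)).mp hv)
    rw [← sup_span_X_eq_varIdeal_insert, ← LocalProjDimLT.congr (quotSMulTopQuotientEquiv _ _),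
      Set.ncard_insert_of_notMem hv]
    cases d with
    | zero =>
      refine iff_of_false (fun h => ?_) (by simp)
      exact Nat.not_lt_zero _ ((ih 0).mp
        ((LocalProjDimLT.quotSMulTop_iff hvU hreg).mp (h.mono (Nat.zero_le 1))))
    | succ d => rw [LocalProjDimLT.quotSMulTop_iff hvU hreg, ih, Nat.succ_lt_succ_iff]

end VarIdealProjDim

section LinearIndependent

lemma linearIndependent_of_projective_of_le_jacobson {A P ι : Type*} [CommRing A]
    [AddCommGroup P] [Module A P] [Module.Projective A P] [Fintype ι] {J : Ideal A}
    (hJ : J ≤ Ideal.jacobson ⊥) {y : ι → P} (hy : Submodule.span A (Set.range y) = ⊤)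
    (hrel : ∀ c : ι → A, ∑ a, c a • y a = 0 → ∀ a, c a ∈ J) : LinearIndependent A y := by
  classical
  let π : (ι → A) →ₗ[A] P := Fintype.linearCombination A y
  have hsurj : Function.Surjective π := by
    rw [← LinearMap.range_eq_top, Fintype.range_linearCombination, hy]
  obtain ⟨s, hs⟩ := Module.projective_lifting_property π LinearMap.id hsurj
  -- A projection onto the relations: since they lie in `J • ⊤`, they even lie in `J • ker π`.
  let ρ : (ι → A) →ₗ[A] (ι → A) := LinearMap.id - s ∘ₗ π
  have hρ : ∀ c ∈ LinearMap.ker π, ρ c = c := fun c hc => by simp [ρ, LinearMap.mem_ker.mp hc]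
  have hrange : LinearMap.range ρ = LinearMap.ker π := by
    refine le_antisymm ?_ fun c hc => ⟨c, hρ c hc⟩
    rintro _ ⟨c, rfl⟩
    have hsc : π (s (π c)) = π c := DFunLike.congr_fun hs (π c)
    simp [ρ, LinearMap.mem_ker, hsc]
  have hker : LinearMap.ker π ≤ J • (⊤ : Submodule A (ι → A)) := by
    intro c hc
    rw [pi_eq_sum_univ' c]
    exact Submodule.sum_mem _ fun a _ => Submodule.smul_mem_smul
      (hrel c ((Fintype.linearCombination_apply A y c).symm.trans hc) a) trivial
  have hle : LinearMap.ker π ≤ J • LinearMap.ker π := calc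
    LinearMap.ker π ≤ (LinearMap.ker π).map ρ := fun c hc => ⟨c, hc, hρ c hc⟩
    _ ≤ (J • (⊤ : Submodule A (ι → A))).map ρ := Submodule.map_mono hker
    _ = J • LinearMap.ker π := by rw [Submodule.map_smul'', Submodule.map_top, hrange]
  have hfg : (LinearMap.ker π).FG := hrange ▸ Module.Finite.iff_fg.mp inferInstance
  have hbot := Submodule.eq_bot_of_le_smul_of_le_jacobson_bot J _ hfg hle hJ
  refine Fintype.linearIndependent_iff.mpr fun c hc => congrFun
    ((Submodule.eq_bot_iff _).mp hbot c ?_)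
  exact (Fintype.linearCombination_apply A y c).trans hc

universe u

variable {R : Type u} [CommRing R] {p : Ideal R} [p.IsPrime] {M : Type u} [AddCommGroup M]
  [Module R M] {ι : Type*} [Fintype ι] {y : ι → M}

lemma mem_maximalIdeal_of_localized_relation
    (hrel : ∀ c : ι → R, ∑ a, c a • y a = 0 → ∀ a, c a ∈ p) {c : ι → Localization.AtPrime p}
    (hc : ∑ a, c a • LocalizedModule.mkLinearMap p.primeCompl M (y a) = 0) (a : ι) :
    c a ∈ IsLocalRing.maximalIdeal (Localization.AtPrime p) := by
  obtain ⟨s, hs⟩ := IsLocalization.exist_integer_multiples_of_finite p.primeCompl c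
  choose r hr using hs
  have hr0 : LocalizedModule.mkLinearMap p.primeCompl M (∑ a, r a • y a) = 0 := calc
    _ = ∑ a, algebraMap R (Localization.AtPrime p) (r a) •
          LocalizedModule.mkLinearMap p.primeCompl M (y a) := by
      simp only [map_sum, map_smul, algebraMap_smul]
    _ = (s : R) • ∑ a, c a • LocalizedModule.mkLinearMap p.primeCompl M (y a) := by
      simp only [hr, smul_assoc, Finset.smul_sum]
    _ = 0 := by rw [hc, smul_zero]
  obtain ⟨t, ht⟩ := (IsLocalizedModule.eq_zero_iff p.primeCompl _).mp hr0
  rw [Submonoid.smul_def] at ht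
  have htr : (t : R) * r a ∈ p := hrel (fun a => t * r a)
    (by simpa only [mul_smul, ← Finset.smul_sum] using ht) a
  have hra : r a ∈ p := (Ideal.IsPrime.mem_or_mem ‹_› htr).resolve_left t.2
  rw [← IsLocalization.AtPrime.to_map_mem_maximal_iff (Localization.AtPrime p) p, hr,
    Algebra.smul_def] at hra
  exact (Ideal.unit_mul_mem_iff_mem _ (IsLocalization.map_units _ s)).mp hra

lemma linearIndependent_of_localProjDimLT_one [IsDomain R]
    (hy : Submodule.span R (Set.range y) = ⊤)
    (hrel : ∀ c : ι → R, ∑ a, c a • y a = 0 → ∀ a, c a ∈ p) (h : LocalProjDimLT p M 1) :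
    LinearIndependent R y := by
  let A := Localization.AtPrime p
  let loc := LocalizedModule.mkLinearMap p.primeCompl M
  have : Module.Projective A (LocalizedModule p.primeCompl M) := LocalProjDimLT.one_iff.mp h
  have hspan : Submodule.span A (Set.range (loc ∘ y)) = ⊤ := by
    rw [Set.range_comp]
    exact span_eq_top_of_isLocalizedModule A p.primeCompl loc hy
  have hA : LinearIndependent A (loc ∘ y) := linearIndependent_of_projective_of_le_jacobson
    (IsLocalRing.maximalIdeal_le_jacobson _) hspan
    fun _ hc => mem_maximalIdeal_of_localized_relation hrel hc
  have hinj : Function.Injective (algebraMap R A) :=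
    IsLocalization.injective A p.primeCompl_le_nonZeroDivisors
  refine .of_comp loc (hA.restrict_scalars ?_)
  simpa only [Algebra.smul_def, mul_one] using hinj

end LinearIndependent

section Graded

universe u

variable {R σ : Type*} [CommRing R] [SetLike σ R] [AddSubmonoidClass σ R] (𝒜 : ℕ → σ)
  [GradedRing 𝒜]

/-- The component of degree `j` in the shifted graded module `R(-e)`. -/
def shiftedProj (e j : ℕ) : R →+ R :=
  if e ≤ j then GradedRing.proj 𝒜 (j - e) else 0

lemma shiftedProj_shiftedProj (r : R) (e j : ℕ) :
    shiftedProj 𝒜 e j (shiftedProj 𝒜 e j r) = shiftedProj 𝒜 e j r := by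
  by_cases hej : e ≤ j <;> simp [shiftedProj, hej, GradedRing.proj_apply]

lemma shiftedProj_mul_shiftedProj (c r : R) (e i j : ℕ) :
    shiftedProj 𝒜 e i (c * shiftedProj 𝒜 e j r) =
      shiftedProj 𝒜 j i c * shiftedProj 𝒜 e j r := by
  by_cases hej : e ≤ j
  · have hr : shiftedProj 𝒜 e j r ∈ 𝒜 (j - e) := by
      simp [shiftedProj, if_pos hej, GradedRing.proj_apply]
    generalize shiftedProj 𝒜 e j r = s at hr ⊢
    by_cases hji : j ≤ i
    · rw [shiftedProj, shiftedProj, if_pos (hej.trans hji), if_pos hji, GradedRing.proj_apply,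
        DirectSum.coe_decompose_mul_of_right_mem_of_le 𝒜 hr (Nat.sub_le_sub_right hji e),
        GradedRing.proj_apply, Nat.sub_sub_sub_cancel_right hej]
    · by_cases hei : e ≤ i
      · rw [shiftedProj, shiftedProj, if_pos hei, if_neg hji, GradedRing.proj_apply,
          DirectSum.coe_decompose_mul_of_right_mem_of_not_le 𝒜 hr (by omega)]
        simp
      · simp [shiftedProj, hei, hji]
  · simp [shiftedProj, hej]

lemma eventually_sum_shiftedProj (e : ℕ) (r : R) :
    ∀ᶠ n in Filter.atTop, ∑ j ∈ Finset.range n, shiftedProj 𝒜 e j r = r := by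
  classical
  let S := (DirectSum.decompose 𝒜 r).support
  filter_upwards [Filter.eventually_ge_atTop (e + (S.sup id + 1))] with n hn
  obtain ⟨m, rfl⟩ := Nat.exists_eq_add_of_le ((Nat.le_add_right _ _).trans hn)
  have hlow : ∑ j ∈ Finset.range e, shiftedProj 𝒜 e j r = 0 :=
    Finset.sum_eq_zero fun j hj => by simp [shiftedProj, (Finset.mem_range.mp hj).not_ge]
  have hS : S ⊆ Finset.range m := fun i hi => by
    have := Finset.le_sup (f := id) hi
    simp only [id_eq] at this
    exact Finset.mem_range.mpr (by omega)
  calc ∑ j ∈ Finset.range (e + m), shiftedProj 𝒜 e j r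
      = ∑ i ∈ Finset.range m, (DirectSum.decompose 𝒜 r i : R) := by
        rw [Finset.sum_range_add, hlow, zero_add]
        simp [shiftedProj, GradedRing.proj_apply]
    _ = ∑ i ∈ S, (DirectSum.decompose 𝒜 r i : R) :=
        (Finset.sum_subset hS fun i _ hi => by simpa [S] using hi).symm
    _ = r := DirectSum.sum_support_decompose 𝒜 r

/-- A finite family `y` in an `R`-module behaves like a family of homogeneous elements of degrees
`d`: its module of relations is a graded submodule of `⨁ R(-d a)`. This lets graded modules be
handled through their generators, without choosing a grading on them. -/
def IsHomogeneousFamily {M ι : Type*} [AddCommGroup M] [Module R M] [Fintype ι] (y : ι → M)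
    (d : ι → ℕ) : Prop :=
  ∀ c : ι → R, ∑ a, c a • y a = 0 → ∀ j, ∑ a, shiftedProj 𝒜 (d a) j (c a) • y a = 0

variable {𝒜} {M : Type*} [AddCommGroup M] [Module R M] {ι : Type*} [Fintype ι]
  {y : ι → M} {d : ι → ℕ}

namespace IsHomogeneousFamily

lemma comp_injective (h : IsHomogeneousFamily 𝒜 y d) {κ : Type*} [Fintype κ] {f : κ → ι}
    (hf : Function.Injective f) : IsHomogeneousFamily 𝒜 (y ∘ f) (d ∘ f) := by
  classical
  intro c hc j
  have hsum : ∀ φ : ι → R →+ R, ∑ b, φ (f b) (c b) • y (f b) =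
      ∑ a, φ a (Function.extend f c 0 a) • y a := fun φ =>
    Fintype.sum_of_injective f hf _ _ (fun a ha => by simp [Function.extend_apply' _ _ _ ha])
      fun b => by rw [hf.extend_apply]
  exact (hsum fun a => shiftedProj 𝒜 (d a) j).trans
    (h _ ((hsum fun _ => AddMonoidHom.id R).symm.trans hc) j)

lemma mem_span_image_compl (h : IsHomogeneousFamily 𝒜 y d) {c : ι → R}
    (hc : ∑ a, c a • y a = 0) {b : ι} (hb : IsUnit (GradedRing.proj 𝒜 0 (c b))) :
    y b ∈ Submodule.span R (y '' {b}ᶜ) := by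
  classical
  have hsum := h c hc (d b)
  rw [← Finset.add_sum_erase _ _ (Finset.mem_univ b), add_eq_zero_iff_eq_neg] at hsum
  rw [← Submodule.smul_mem_iff_of_isUnit _ hb]
  have hbb : shiftedProj 𝒜 (d b) (d b) = GradedRing.proj 𝒜 0 := by simp [shiftedProj]
  rw [← hbb, hsum]
  exact neg_mem (Submodule.sum_mem _ fun a ha => Submodule.smul_mem _ _
    (Submodule.subset_span ⟨a, Finset.ne_of_mem_erase ha, rfl⟩))

/-- Graded Nakayama: discard generators until the family is minimal. -/
lemma exists_span_eq_top_and_relations_mem {p : Ideal R}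
    (hp : ∀ r ∉ p, IsUnit (GradedRing.proj 𝒜 0 r)) (h : IsHomogeneousFamily 𝒜 y d)
    (hy : Submodule.span R (Set.range y) = ⊤) :
    ∃ S : Finset ι, Submodule.span R (Set.range fun a : S => y a) = ⊤ ∧
      ∀ c : S → R, ∑ a, c a • y a = 0 → ∀ a, c a ∈ p := by
  classical
  obtain ⟨S, hS⟩ := exists_minimal_of_wellFoundedLT
    (fun S : Finset ι => Submodule.span R (Set.range fun a : S => y a) = ⊤)
    ⟨Finset.univ, by rw [← hy]; congr 1; ext; simp⟩
  refine ⟨S, hS.prop, fun c hc b => ?_⟩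
  by_contra hb
  have hmem := (h.comp_injective Subtype.val_injective).mem_span_image_compl hc (hp _ hb)
  have herase : Submodule.span R (Set.range fun a : S.erase b => y a) = ⊤ := by
    rw [eq_top_iff, ← hS.prop, Submodule.span_le]
    have himage : (y ∘ Subtype.val) '' ({b}ᶜ : Set S) ⊆ Set.range fun a : S.erase b => y a := by
      rintro _ ⟨a, ha, rfl⟩
      exact ⟨⟨a, Finset.mem_erase.mpr ⟨Subtype.coe_ne_coe.mpr ha, a.2⟩⟩, rfl⟩
    rintro _ ⟨a, rfl⟩
    by_cases hab : a = b
    · exact hab ▸ Submodule.span_mono himage hmem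
    · exact Submodule.subset_span (himage ⟨a, hab, rfl⟩)
  exact Finset.notMem_erase _ _ (hS.le_of_le herase (Finset.erase_subset _ _) b.2)

variable (𝒜 d) in
/-- The elements of degree `e` of the graded module `⨁ R(-d a)`. -/
def IsHomogeneousVector (e : ℕ) (z : ι → R) : Prop :=
  ∀ a, shiftedProj 𝒜 (d a) e (z a) = z a

lemma span_homogeneous_relations (h : IsHomogeneousFamily 𝒜 y d) :
    Submodule.span R {z | z ∈ LinearMap.ker (Fintype.linearCombination R y) ∧
      ∃ e, IsHomogeneousVector 𝒜 d e z} = LinearMap.ker (Fintype.linearCombination R y) := by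
  refine le_antisymm (Submodule.span_le.mpr fun z hz => hz.1) fun z hz => ?_
  obtain ⟨n, hn⟩ := (Filter.eventually_all.mpr fun a =>
    eventually_sum_shiftedProj 𝒜 (d a) (z a)).exists
  have hz' : z = ∑ j ∈ Finset.range n, fun a => shiftedProj 𝒜 (d a) j (z a) := by
    ext a
    rw [Finset.sum_apply, hn]
  rw [hz']
  refine Submodule.sum_mem _ fun j _ => Submodule.subset_span ⟨?_, j, fun a => ?_⟩
  · simpa [Fintype.linearCombination_apply] using
      h z (by simpa [Fintype.linearCombination_apply] using hz) j
  · exact shiftedProj_shiftedProj 𝒜 _ _ _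

lemma exists_ker_generators [IsNoetherianRing R] (h : IsHomogeneousFamily 𝒜 y d) :
    ∃ (T : Finset (ι → R)) (z : T → LinearMap.ker (Fintype.linearCombination R y)) (e : T → ℕ),
      Submodule.span R (Set.range z) = ⊤ ∧ IsHomogeneousFamily 𝒜 z e := by
  classical
  have hfg := IsNoetherian.noetherian (LinearMap.ker (Fintype.linearCombination R y))
  rw [← h.span_homogeneous_relations] at hfg
  obtain ⟨T, hT, hspan⟩ := (Submodule.fg_span_iff_fg_span_finset_subset _).mp hfg
  rw [h.span_homogeneous_relations] at hspan
  choose e he using fun t : T => (hT t.2).2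
  refine ⟨T, fun t => ⟨t, (hT t.2).1⟩, e, ?_, fun c hc j => ?_⟩
  · refine (Submodule.span_range_subtype_eq_top_iff _ fun t => (hT t.2).1).mpr ?_
    rw [Subtype.range_val, hspan]
  · ext a
    have hc' : ∑ t, c t * (t : ι → R) a = 0 := by
      simpa using congrFun (congrArg Subtype.val hc) a
    have hcomp : ∀ t : T, shiftedProj 𝒜 (d a) j (c t * (t : ι → R) a) =
        shiftedProj 𝒜 (e t) j (c t) * (t : ι → R) a := fun t => by
      rw [← he t a, shiftedProj_mul_shiftedProj]
    simpa [hcomp] using congrArg (shiftedProj 𝒜 (d a) j) hc'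

end IsHomogeneousFamily

lemma IsHomogeneousFamily.quotient_mk_one {I : Ideal R} (hI : I.IsHomogeneous 𝒜) :
    IsHomogeneousFamily 𝒜 (fun _ : PUnit.{u + 1} => (1 : R ⧸ I)) fun _ => 0 := by
  intro c hc j
  have hmem : ∀ r : R, r • (1 : R ⧸ I) = 0 ↔ r ∈ I := fun r => by
    rw [← Ideal.Quotient.eq_zero_iff_mem, Algebra.smul_def, mul_one]; rfl
  simp only [Finset.univ_unique, Finset.sum_singleton, hmem] at hc ⊢
  simpa [shiftedProj] using hI.mem_iff.mp hc j

end Graded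

section GradedProjDim

universe u

variable {R M ι : Type u} {σ : Type*} [CommRing R] [IsDomain R] [IsNoetherianRing R]
  [SetLike σ R] [AddSubmonoidClass σ R] {𝒜 : ℕ → σ} [GradedRing 𝒜] {p : Ideal R} [p.IsPrime]
  [AddCommGroup M] [Module R M] [Fintype ι] {y : ι → M} {d : ι → ℕ}

/-- Minimal homogeneous generators stay minimal in the localization, so a graded module has no
larger projective dimension than its localization at the homogeneous maximal ideal. -/
theorem IsHomogeneousFamily.hasProjectiveDimensionLT
    (hp : ∀ r ∉ p, IsUnit (GradedRing.proj 𝒜 0 r)) (h : IsHomogeneousFamily 𝒜 y d)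
    (hy : Submodule.span R (Set.range y) = ⊤) {m : ℕ} (hM : LocalProjDimLT p M (m + 1)) :
    HasProjectiveDimensionLT (ModuleCat.of R M) (m + 1) := by
  induction m generalizing M ι with
  | zero =>
    obtain ⟨S, hS, hrel⟩ := h.exists_span_eq_top_and_relations_mem hp hy
    exact (projective_iff_hasProjectiveDimensionLT_one).mp (ModuleCat.projective_of_free
      (Module.Basis.mk (linearIndependent_of_localProjDimLT_one hS hrel hM) hS.ge))
  | succ m ih =>
    have hfree : HasProjectiveDimensionLT (ModuleCat.of R (ι → R)) 1 :=
      (projective_iff_hasProjectiveDimensionLT_one).mp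
        (ModuleCat.projective_of_free (Pi.basisFun R ι))
    have hsurj : Function.Surjective (Fintype.linearCombination R y) := by
      rw [← LinearMap.range_eq_top, Fintype.range_linearCombination, hy]
    have hinj := Submodule.subtype_injective (LinearMap.ker (Fintype.linearCombination R y))
    have hexact := LinearMap.exact_subtype_ker_map (Fintype.linearCombination R y)
    have hker : LocalProjDimLT p (LinearMap.ker (Fintype.linearCombination R y)) (m + 1) :=
      .of_exact_left hinj hsurj hexact
        ((LocalProjDimLT.of_hasProjectiveDimensionLT hfree).mono (Nat.le_add_left 1 m)) hM
    obtain ⟨T, z, e, hz, hze⟩ := h.exists_ker_generators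
    exact (shortExact_ofHom hinj hsurj hexact).hasProjectiveDimensionLT_X₃ _ (ih hze hz hker)
      (hasProjectiveDimensionLT_of_ge _ 1 _ (by omega))

end GradedProjDim

section AuslanderBuchsbaum

lemma eq_bot_or_eq_top_of_hasProjectiveDimensionLT_one {R : Type*} [CommRing R] [IsDomain R]
    {I : Ideal R} (h : HasProjectiveDimensionLT (ModuleCat.of R (R ⧸ I)) 1) : I = ⊥ ∨ I = ⊤ := by
  rw [← projective_iff_hasProjectiveDimensionLT_one, ← IsProjective.iff_projective] at h
  rw [or_iff_not_imp_left, Submodule.eq_bot_iff]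
  push Not
  rintro ⟨r, hrI, hr⟩
  have hsmul : r • (1 : R ⧸ I) = 0 := by
    rw [Algebra.smul_def, mul_one]
    exact Ideal.Quotient.eq_zero_iff_mem.mpr hrI
  rw [Ideal.eq_top_iff_one, ← Ideal.Quotient.eq_zero_iff_mem]
  exact (smul_eq_zero.mp hsmul).resolve_left hr

variable {K V : Type} [Field K]

lemma maxIdeal_eq_varIdeal_univ : maxIdeal K V = varIdeal K (Set.univ : Set V) := by
  rw [maxIdeal, varIdeal, Set.image_univ]

lemma maxIdeal_eq_ker_constantCoeff :
    maxIdeal K V = RingHom.ker (constantCoeff : MvPolynomial V K →+* K) := by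
  ext r
  rw [← pow_one (maxIdeal K V), RingHom.mem_ker, constantCoeff_eq]
  refine (mem_pow_idealOfVars_iff' 1 r).trans ⟨fun h => h 0 (by simp), fun h x hx => ?_⟩
  rwa [(Finsupp.degree_eq_zero_iff x).mp (Nat.lt_one_iff.mp hx)]

instance varIdeal_univ_isMaximal : (varIdeal K (Set.univ : Set V)).IsMaximal := by
  rw [← maxIdeal_eq_varIdeal_univ, maxIdeal_eq_ker_constantCoeff]
  exact RingHom.ker_isMaximal_of_surjective _ fun a => ⟨C a, constantCoeff_C _ a⟩

attribute [local instance] MvPolynomial.gradedAlgebra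

lemma isUnit_proj_zero_of_notMem_varIdeal_univ {r : MvPolynomial V K}
    (hr : r ∉ varIdeal K (Set.univ : Set V)) :
    IsUnit (GradedRing.proj (homogeneousSubmodule V K) 0 r) := by
  rw [← maxIdeal_eq_varIdeal_univ, maxIdeal_eq_ker_constantCoeff, RingHom.mem_ker,
    constantCoeff_eq] at hr
  have hproj : GradedRing.proj (homogeneousSubmodule V K) 0 r = homogeneousComponent 0 r :=
    decomposition.decompose'_apply r 0
  rw [hproj, homogeneousComponent_zero]
  exact (IsUnit.mk0 _ hr).map C

variable {I : Ideal (MvPolynomial V K)} (hI : I.IsHomogeneous (homogeneousSubmodule V K))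
include hI

lemma le_varIdeal_univ_of_isHomogeneous (hI_top : I ≠ ⊤) : I ≤ varIdeal K (Set.univ : Set V) := by
  intro r hr
  by_contra hr'
  exact hI_top (I.eq_top_of_isUnit_mem (hI 0 hr) (isUnit_proj_zero_of_notMem_varIdeal_univ hr'))

variable [Finite V]

lemma hasProjectiveDimensionLT_quotient_iff {d : ℕ} :
    HasProjectiveDimensionLT (ModuleCat.of (MvPolynomial V K) (MvPolynomial V K ⧸ I)) (d + 1) ↔
      LocalProjDimLT (varIdeal K (Set.univ : Set V)) (MvPolynomial V K ⧸ I) (d + 1) := by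
  refine ⟨.of_hasProjectiveDimensionLT, (IsHomogeneousFamily.quotient_mk_one
    hI).hasProjectiveDimensionLT (fun r => isUnit_proj_zero_of_notMem_varIdeal_univ) ?_⟩
  rw [Set.range_const]
  exact Ideal.Quotient.span_singleton_one I

variable (hI_top : I ≠ ⊤)
include hI_top

lemma localProjDimLT_varIdeal_univ_quotient_iff (d : ℕ) :
    LocalProjDimLT (varIdeal K (Set.univ : Set V)) (MvPolynomial V K ⧸ I) d ↔
      Nat.card V < d + mdepth (maxIdeal K V) (MvPolynomial V K ⧸ I) := by
  rw [maxIdeal_eq_varIdeal_univ, ← Set.ncard_univ]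
  exact localProjDimLT_iff_lt_add_mdepth
    (fun d => localProjDimLT_quotient_varIdeal_iff (Set.Subset.refl _))
    (fun h => LocalProjDimLT.quotient_zero_iff.mp h (le_varIdeal_univ_of_isHomogeneous hI hI_top)) d

lemma setOf_hasProjectiveDimensionLT_quotient :
    {d : ℕ | HasProjectiveDimensionLT (ModuleCat.of (MvPolynomial V K) (MvPolynomial V K ⧸ I))
      (d + 1)} = Set.Ici (Nat.card V - mdepth (maxIdeal K V) (MvPolynomial V K ⧸ I)) := by
  ext d
  rw [Set.mem_ofPred_eq, hasProjectiveDimensionLT_quotient_iff hI,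
    localProjDimLT_varIdeal_univ_quotient_iff hI hI_top, Set.mem_Ici]
  omega

theorem projDim_add_mdepth_quotient :
    projDim (MvPolynomial V K) (ModuleCat.of _ (MvPolynomial V K ⧸ I)) +
      mdepth (maxIdeal K V) (MvPolynomial V K ⧸ I) = Nat.card V := by
  have hdepth : mdepth (maxIdeal K V) (MvPolynomial V K ⧸ I) ≤ Nat.card V := by
    by_contra! h
    refine LocalProjDimLT.quotient_zero_iff.mp
      ((localProjDimLT_varIdeal_univ_quotient_iff hI hI_top 0).mpr (by omega))
      (le_varIdeal_univ_of_isHomogeneous hI hI_top)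
  rw [projDim_eq_sInf_hasProjectiveDimensionLT, setOf_hasProjectiveDimensionLT_quotient hI hI_top,
    csInf_Ici, Nat.sub_add_cancel hdepth]

lemma hasProjectiveDimensionLT_projDim_quotient :
    HasProjectiveDimensionLT (ModuleCat.of (MvPolynomial V K) (MvPolynomial V K ⧸ I))
      (projDim (MvPolynomial V K) (ModuleCat.of _ (MvPolynomial V K ⧸ I)) + 1) := by
  rw [projDim_eq_sInf_hasProjectiveDimensionLT]
  refine Nat.sInf_mem (s := {d : ℕ | HasProjectiveDimensionLT _ (d + 1)}) ?_
  rw [setOf_hasProjectiveDimensionLT_quotient hI hI_top]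
  exact Set.nonempty_Ici

lemma one_le_projDim_quotient (hI_bot : I ≠ ⊥) :
    1 ≤ projDim (MvPolynomial V K) (ModuleCat.of _ (MvPolynomial V K ⧸ I)) := by
  have h := hasProjectiveDimensionLT_projDim_quotient hI hI_top
  by_contra! h0
  rw [Nat.lt_one_iff.mp h0] at h
  exact (eq_bot_or_eq_top_of_hasProjectiveDimensionLT_one h).elim hI_bot hI_top

end AuslanderBuchsbaum

section EdgeIdeal

lemma ringKrullDim_quotient_le_of_forall_isPrime {R : Type*} [CommRing R] {I : Ideal R}
    {d : WithBot ℕ∞} (h : ∀ P : Ideal R, P.IsPrime → I ≤ P → ringKrullDim (R ⧸ P) ≤ d) :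
    ringKrullDim (R ⧸ I) ≤ d := by
  rw [ringKrullDim_quotient]
  refine iSup_le fun s => le_trans ?_ (h (s 0).1.asIdeal (s 0).1.isPrime (s 0).2)
  rw [ringKrullDim_quotient]
  exact Order.LTSeries.length_le_krullDim (α := PrimeSpectrum.zeroLocus _)
    ⟨s.length, fun i => ⟨(s i).1, s.monotone (Fin.zero_le i)⟩, fun i => s.step i⟩

variable {K V : Type} [Field K] {G : SimpleGraph V} {C : Set V} {u v : V}

lemma X_mul_X_mem_edgeIdeal (huv : G.Adj u v) : (X u * X v : MvPolynomial V K) ∈ edgeIdeal K G :=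
  Ideal.subset_span ⟨u, v, huv, rfl⟩

lemma edgeIdeal_ne_bot (huv : G.Adj u v) : edgeIdeal K G ≠ ⊥ := fun h =>
  mul_ne_zero (X_ne_zero u) (X_ne_zero v) (h ▸ X_mul_X_mem_edgeIdeal huv :
    (X u * X v : MvPolynomial V K) ∈ (⊥ : Ideal (MvPolynomial V K)))

attribute [local instance] MvPolynomial.gradedAlgebra in
lemma edgeIdeal_isHomogeneous : (edgeIdeal K G).IsHomogeneous (homogeneousSubmodule V K) := by
  refine Ideal.homogeneous_span _ _ ?_
  rintro _ ⟨u, v, -, rfl⟩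
  exact ⟨1 + 1, (isHomogeneous_X K u).mul (isHomogeneous_X K v)⟩

lemma edgeIdeal_le_varIdeal_iff : edgeIdeal K G ≤ varIdeal K C ↔ IsVertexCover G C := by
  refine ⟨fun h u v huv => ?_, fun hC => Ideal.span_le.mpr ?_⟩
  · simpa only [X_mem_varIdeal] using
      varIdeal_isPrime.mem_or_mem (h (X_mul_X_mem_edgeIdeal huv))
  · rintro _ ⟨u, v, huv, rfl⟩
    exact (hC huv).elim (fun hu => Ideal.mul_mem_right _ _ (X_mem_varIdeal.mpr hu))
      fun hv => Ideal.mul_mem_left _ _ (X_mem_varIdeal.mpr hv)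

lemma edgeIdeal_ne_top : edgeIdeal K G ≠ ⊤ := fun h =>
  varIdeal_isPrime.ne_top (top_le_iff.mp
    (h ▸ edgeIdeal_le_varIdeal_iff.mpr fun u _ _ => Or.inl (Set.mem_univ u)))

lemma mem_edgeIdeal {f : MvPolynomial V K} :
    f ∈ edgeIdeal K G ↔ ∀ m ∈ f.support, ∃ u v, G.Adj u v ∧ m u ≠ 0 ∧ m v ≠ 0 := by
  have hgen : {m : MvPolynomial V K | ∃ u v, G.Adj u v ∧ m = X u * X v} =
      (fun s => monomial s 1) '' {s | ∃ u v, G.Adj u v ∧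
        s = Finsupp.single u 1 + Finsupp.single v 1} := by
    ext m
    simp only [X, monomial_mul, Set.mem_image, Set.mem_ofPred_eq, mul_one]
    grind
  rw [edgeIdeal, hgen, mem_ideal_span_monomial_image]
  refine forall₂_congr fun m _ => ⟨?_, ?_⟩
  · rintro ⟨_, ⟨u, v, huv, rfl⟩, hle⟩
    have hu := hle u
    have hv := hle v
    simp only [Finsupp.add_apply, Finsupp.single_eq_same] at hu hv
    exact ⟨u, v, huv, by omega, by omega⟩
  · rintro ⟨u, v, huv, hu, hv⟩
    refine ⟨_, ⟨u, v, huv, rfl⟩, fun w => ?_⟩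
    classical
    simp only [Finsupp.add_apply, Finsupp.single_apply]
    grind [huv.ne]

lemma mem_edgeIdeal_iff_forall_isVertexCover {f : MvPolynomial V K} :
    f ∈ edgeIdeal K G ↔ ∀ C, IsVertexCover G C → f ∈ varIdeal K C := by
  refine ⟨fun hf C hC => edgeIdeal_le_varIdeal_iff.mpr hC hf, fun h => mem_edgeIdeal.mpr ?_⟩
  by_contra! ⟨m, hm, hnot⟩
  obtain ⟨i, hi, hi'⟩ := mem_ideal_span_X_image.mp (h {v | m v = 0}
    fun u v huv => or_iff_not_imp_left.mpr (hnot u v huv)) m hm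
  exact hi' hi

lemma coverNumber_le (hC : IsVertexCover G C) : coverNumber G ≤ C.ncard :=
  Nat.sInf_le ⟨C, hC, rfl⟩

variable (G) in
lemma exists_isVertexCover_ncard_eq_coverNumber :
    ∃ C, IsVertexCover G C ∧ C.ncard = coverNumber G :=
  Nat.sInf_mem (s := {k | ∃ C : Set V, IsVertexCover G C ∧ C.ncard = k})
    ⟨_, Set.univ, fun u _ _ => Or.inl (Set.mem_univ u), rfl⟩

theorem ringKrullDim_quotient_edgeIdeal [Finite V] :
    ringKrullDim (MvPolynomial V K ⧸ edgeIdeal K G) = (Nat.card V - coverNumber G : ℕ) := by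
  refine le_antisymm (ringKrullDim_quotient_le_of_forall_isPrime fun P _ hP => ?_) ?_
  · have hC : IsVertexCover G {v | (X v : MvPolynomial V K) ∈ P} := fun u v huv =>
      Ideal.IsPrime.mem_or_mem ‹_› (hP (X_mul_X_mem_edgeIdeal huv))
    calc ringKrullDim (MvPolynomial V K ⧸ P)
      _ ≤ ringKrullDim (MvPolynomial V K ⧸ varIdeal K {v | (X v : MvPolynomial V K) ∈ P}) :=
        ringKrullDim_le_of_surjective _
          (Ideal.Quotient.factor_surjective (varIdeal_le_iff.mpr fun _ hv => hv))
      _ ≤ (Nat.card V - coverNumber G : ℕ) := by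
        rw [ringKrullDim_quotient_varIdeal]
        exact_mod_cast Nat.sub_le_sub_left (coverNumber_le hC) _
  · obtain ⟨C, hC, hcard⟩ := exists_isVertexCover_ncard_eq_coverNumber G
    rw [← hcard, ← ringKrullDim_quotient_varIdeal (K := K)]
    exact ringKrullDim_le_of_surjective _
      (Ideal.Quotient.factor_surjective (edgeIdeal_le_varIdeal_iff.mpr hC))

end EdgeIdeal

section CoverIdeal

variable {K V : Type} [Field K] {G : SimpleGraph V} {u v : V} {f : MvPolynomial V K} {d : ℕ}

lemma mem_coverIdeal : f ∈ coverIdeal K G ↔ ∀ u v, G.Adj u v → f ∈ varIdeal K {u, v} := by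
  simp only [coverIdeal, varIdeal, Submodule.mem_iInf, Set.image_pair]

lemma prod_X_mem_coverIdeal {A : Finset V} (hA : IsVertexCover G A) :
    (∏ a ∈ A, X a : MvPolynomial V K) ∈ coverIdeal K G :=
  mem_coverIdeal.mpr fun _ _ huv => (hA huv).elim
    (fun hu => Ideal.prod_mem _ hu (X_mem_varIdeal.mpr (Set.mem_insert _ _)))
    fun hv => Ideal.prod_mem _ hv (X_mem_varIdeal.mpr (Set.mem_insert_of_mem _ rfl))

lemma isVertexCover_support_of_mem_coverIdeal (hf : f ∈ coverIdeal K G) {m : V →₀ ℕ}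
    (hm : m ∈ f.support) : IsVertexCover G m.support := by
  intro u v huv
  obtain ⟨i, hi, hmi⟩ := mem_ideal_span_X_image.mp (mem_coverIdeal.mp hf u v huv) m hm
  simp only [Finset.mem_coe, Finsupp.mem_support_iff]
  rcases hi with rfl | rfl
  exacts [Or.inl hmi, Or.inr hmi]

lemma coverNumber_le_of_mem_coverIdeal (hf : f ∈ coverIdeal K G) (hf₀ : f ≠ 0)
    (hd : f.IsHomogeneous d) : coverNumber G ≤ d := by
  obtain ⟨m, hm⟩ := support_nonempty.mpr hf₀
  calc coverNumber G
    _ ≤ m.support.card := by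
      simpa using coverNumber_le (isVertexCover_support_of_mem_coverIdeal hf hm)
    _ ≤ m.degree := by
      rw [Finset.card_eq_sum_ones, Finsupp.degree_apply]
      exact Finset.sum_le_sum fun i hi => Nat.one_le_iff_ne_zero.mpr
        (Finsupp.mem_support_iff.mp hi)
    _ = d := (Finsupp.degree_eq_weight_one (R := ℕ) ▸ hd (mem_support_iff.mp hm) :)

/- The product of all the variables lies in the cover ideal, so a prime colon ideal contains some
variable `X u`, and then `X u * f` is an element of the cover ideal of degree `d + 1`. -/
theorem coverNumber_le_of_isPrime_colon [Finite V] (hd : f.IsHomogeneous d)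
    (hf : ((coverIdeal K G).colon (Ideal.span {f})).IsPrime) : coverNumber G ≤ d + 1 := by
  cases nonempty_fintype V
  have hprod : (∏ v, X v : MvPolynomial V K) ∈ (coverIdeal K G).colon (Ideal.span {f}) :=
    Ideal.le_colon (prod_X_mem_coverIdeal fun u _ _ => Or.inl (Finset.mem_coe.mpr
      (Finset.mem_univ u)))
  obtain ⟨u, -, hu⟩ := hf.prod_mem_iff.mp hprod
  have hf₀ : f ≠ 0 := by
    rintro rfl
    exact hf.ne_top (by simp)
  rw [add_comm]
  exact coverNumber_le_of_mem_coverIdeal (Ideal.mem_colon_span_singleton.mp hu)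
    (mul_ne_zero (X_ne_zero u) hf₀) ((isHomogeneous_X K u).mul hd)

lemma coverIdeal_colon_prod_X {A : Finset V} (huA : u ∉ A) (hvA : v ∉ A) (huv : G.Adj u v)
    (hu : IsVertexCover G (insert u A)) (hv : IsVertexCover G (insert v A)) :
    (coverIdeal K G).colon (Ideal.span {(∏ a ∈ A, X a : MvPolynomial V K)}) =
      varIdeal K {u, v} := by
  refine le_antisymm (fun g hg => ?_) (varIdeal_le_iff.mpr ?_)
  · rw [Ideal.mem_colon_span_singleton] at hg
    refine (varIdeal_isPrime.mem_or_mem (mem_coverIdeal.mp hg u v huv)).resolve_right ?_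
    simp only [varIdeal_isPrime.prod_mem_iff, X_mem_varIdeal]
    rintro ⟨a, ha, rfl | rfl⟩
    exacts [huA ha, hvA ha]
  · classical
    have hX : ∀ w ∉ A, IsVertexCover G (insert w A) →
        X w ∈ (coverIdeal K G).colon (Ideal.span {(∏ a ∈ A, X a : MvPolynomial V K)}) :=
      fun w hwA hw => by
        rw [Ideal.mem_colon_span_singleton, ← Finset.prod_insert hwA]
        exact prod_X_mem_coverIdeal (by rwa [Finset.coe_insert])
    rintro w (rfl | rfl)
    exacts [hX _ huA hu, hX _ hvA hv]

theorem vNumber_coverIdeal_eq_ncard [Finite V] {A : Set V} (hA : A.ncard + 1 = coverNumber G)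
    (huv : G.Adj u v) (hu : IsVertexCover G (insert u A)) (hv : IsVertexCover G (insert v A)) :
    vNumber (coverIdeal K G) = A.ncard := by
  have hnotMem : ∀ w, IsVertexCover G (insert w A) → w ∉ A := fun w hw hwA => by
    have := coverNumber_le hw
    rw [Set.insert_eq_of_mem hwA] at this
    omega
  obtain ⟨A, rfl⟩ := A.toFinite.exists_finset_coe
  rw [Set.ncard_coe_finset] at hA ⊢
  have hprime : ((coverIdeal K G).colon
      (Ideal.span {(∏ a ∈ A, X a : MvPolynomial V K)})).IsPrime := by
    rw [coverIdeal_colon_prod_X (hnotMem u hu) (hnotMem v hv) huv hu hv]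
    exact varIdeal_isPrime
  have hdeg : (∏ a ∈ A, X a : MvPolynomial V K).IsHomogeneous A.card := by
    simpa using IsHomogeneous.prod A (X (R := K)) 1 fun a _ => isHomogeneous_X K a
  have hmem : A.card ∈ {d | ∃ f : MvPolynomial V K, f.IsHomogeneous d ∧
      ((coverIdeal K G).colon (Ideal.span {f})).IsPrime} := ⟨_, hdeg, hprime⟩
  refine le_antisymm (Nat.sInf_le hmem) (le_csInf ⟨_, hmem⟩ ?_)
  rintro d ⟨f, hf, hfprime⟩
  have := coverNumber_le_of_isPrime_colon hf hfprime
  omega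

end CoverIdeal

section MayerVietoris

variable {R M : Type*} [CommRing R] [AddCommGroup M] [Module R M] (N₁ N₂ : Submodule R M)

/-- The first map `x ↦ (x, x)` of the Mayer–Vietoris sequence of two submodules. -/
def quotientInfToProd : (M ⧸ N₁ ⊓ N₂) →ₗ[R] (M ⧸ N₁) × (M ⧸ N₂) :=
  (Submodule.factor inf_le_left).prod (Submodule.factor inf_le_right)

/-- The second map `(x, y) ↦ x - y` of the Mayer–Vietoris sequence of two submodules. -/
def prodToQuotientSup : (M ⧸ N₁) × (M ⧸ N₂) →ₗ[R] M ⧸ N₁ ⊔ N₂ :=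
  (Submodule.factor le_sup_left).coprod (-Submodule.factor le_sup_right)

lemma prodToQuotientSup_mk (x y : M) :
    prodToQuotientSup N₁ N₂ (Submodule.Quotient.mk x, Submodule.Quotient.mk y) =
      Submodule.Quotient.mk (x - y) := by
  simp [prodToQuotientSup, sub_eq_add_neg]

lemma quotientInfToProd_injective : Function.Injective (quotientInfToProd N₁ N₂) := by
  refine (injective_iff_map_eq_zero _).mpr fun x hx => ?_
  obtain ⟨x, rfl⟩ := Submodule.Quotient.mk_surjective _ x
  simpa [quotientInfToProd] using hx

lemma prodToQuotientSup_surjective : Function.Surjective (prodToQuotientSup N₁ N₂) := fun x => by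
  obtain ⟨x, rfl⟩ := Submodule.Quotient.mk_surjective _ x
  exact ⟨(Submodule.Quotient.mk x, Submodule.Quotient.mk 0), by rw [prodToQuotientSup_mk, sub_zero]⟩

lemma exact_quotientInfToProd_prodToQuotientSup :
    Function.Exact (quotientInfToProd N₁ N₂) (prodToQuotientSup N₁ N₂) := by
  rintro ⟨x, y⟩
  obtain ⟨x, rfl⟩ := Submodule.Quotient.mk_surjective _ x
  obtain ⟨y, rfl⟩ := Submodule.Quotient.mk_surjective _ y
  rw [prodToQuotientSup_mk, Submodule.Quotient.mk_eq_zero, Submodule.mem_sup]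
  constructor
  · rintro ⟨s, hs, t, ht, hst⟩
    refine ⟨Submodule.Quotient.mk (x - s), Prod.ext ?_ ?_⟩
    · exact (Submodule.Quotient.eq _).mpr (by simpa using hs)
    · refine (Submodule.Quotient.eq _).mpr (?_ : x - s - y ∈ N₂)
      rwa [sub_right_comm, ← hst, add_sub_cancel_left]
  · rintro ⟨z, hz⟩
    obtain ⟨z, rfl⟩ := Submodule.Quotient.mk_surjective _ z
    have hz₁ : z - x ∈ N₁ := (Submodule.Quotient.eq _).mp (congrArg Prod.fst hz)
    have hz₂ : z - y ∈ N₂ := (Submodule.Quotient.eq _).mp (congrArg Prod.snd hz)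
    exact ⟨-(z - x), N₁.neg_mem hz₁, z - y, hz₂, by abel⟩

end MayerVietoris

section Connectedness

lemma LocalProjDimLT.quotient_of_mul_mem {R : Type*} [CommRing R] {p I J : Ideal R} [p.IsPrime]
    {s : R} {d : ℕ} (hs : s ∉ p) (hIJ : I ≤ J) (hJI : ∀ y ∈ J, s * y ∈ I)
    (h : LocalProjDimLT p (R ⧸ I) d) : LocalProjDimLT p (R ⧸ J) d := by
  cases d with
  | zero => exact quotient_zero_iff.mpr fun hJ => quotient_zero_iff.mp h (hIJ.trans hJ)
  | succ d =>
  refine of_exact_right (f := (LinearMap.ker (Submodule.factor hIJ)).subtype)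
    (g := Submodule.factor hIJ) (Submodule.subtype_injective _) (Submodule.factor_surjective hIJ)
    (LinearMap.exact_subtype_ker_map _) (mono (zero_of_smul_eq_zero hs ?_) d.zero_le) h
  rintro ⟨y, hy⟩
  obtain ⟨y, rfl⟩ := Submodule.Quotient.mk_surjective _ y
  have hyJ : y ∈ J := (Submodule.Quotient.mk_eq_zero J).mp hy
  exact Subtype.ext ((Submodule.Quotient.mk_eq_zero I).mpr (hJI y hyJ))

lemma LocalProjDimLT.quotient_sup {R : Type*} [CommRing R] {p I J : Ideal R} [p.IsPrime] {d : ℕ}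
    (hIJ : LocalProjDimLT p (R ⧸ I ⊓ J) d) (hI : LocalProjDimLT p (R ⧸ I) (d + 1))
    (hJ : LocalProjDimLT p (R ⧸ J) (d + 1)) : LocalProjDimLT p (R ⧸ I ⊔ J) (d + 1) :=
  of_exact_right (quotientInfToProd_injective I J) (prodToQuotientSup_surjective I J)
    (exact_quotientInfToProd_prodToQuotientSup I J) hIJ
    (of_exact_middle LinearMap.inl_injective LinearMap.snd_surjective .inl_snd hI hJ)

variable {K V : Type} [Field K] {U : Set V} {𝓓 : Set (Set V)}

lemma sum_X_notMem_varIdeal {U : Finset V} {S : Set V} (hUS : ¬ (U : Set V) ⊆ S) :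
    (∑ v ∈ U, X v : MvPolynomial V K) ∉ varIdeal K S := by
  classical
  obtain ⟨v, hvU, hvS⟩ := Set.not_subset.mp hUS
  have hS : varIdeal K S ≤ RingHom.ker (eval (Pi.single v (1 : K))) :=
    varIdeal_le_iff.mpr fun w hw => by
      rw [RingHom.mem_ker, eval_X, Pi.single_eq_of_ne (ne_of_mem_of_not_mem hw hvS)]
  intro hmem
  have := hS hmem
  rw [RingHom.mem_ker, map_sum] at this
  simp [Finset.sum_pi_single', Finset.mem_coe.mp hvU] at this

lemma varIdeal_sup_iInf_varIdeal {C : Set V} (h𝓓 : 𝓓.Nonempty) (hCD : ∀ D ∈ 𝓓, C ∪ D = U) :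
    varIdeal K C ⊔ ⨅ D ∈ 𝓓, varIdeal K D = varIdeal K U := by
  obtain ⟨D₀, hD₀⟩ := h𝓓
  apply le_antisymm
  · calc varIdeal K C ⊔ ⨅ D ∈ 𝓓, varIdeal K D
      _ ≤ varIdeal K C ⊔ varIdeal K D₀ := sup_le_sup_left (iInf₂_le D₀ hD₀) _
      _ = varIdeal K U := by rw [varIdeal_sup, hCD D₀ hD₀]
  · refine varIdeal_le_iff.mpr fun v hv => ?_
    by_cases hvC : v ∈ C
    · exact Ideal.mem_sup_left (X_mem_varIdeal.mpr hvC)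
    · refine Ideal.mem_sup_right ?_
      simp only [Submodule.mem_iInf, X_mem_varIdeal]
      exact fun D hD => ((hCD D hD).symm ▸ hv : v ∈ C ∪ D).resolve_left hvC

variable [Finite V]

/- The sum of the variables in `U` avoids every `varIdeal K D`, hence is regular on the quotient by
their intersection. -/
lemma localProjDimLT_quotient_iInf_varIdeal (h𝓓 : ∀ D ∈ 𝓓, ¬ U ⊆ D) :
    LocalProjDimLT (varIdeal K U) (MvPolynomial V K ⧸ ⨅ D ∈ 𝓓, varIdeal K D) U.ncard := by
  obtain ⟨U, rfl⟩ := U.toFinite.exists_finset_coe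
  have hreg : IsSMulRegular (MvPolynomial V K ⧸ ⨅ D ∈ 𝓓, varIdeal K D)
      (∑ v ∈ U, X v : MvPolynomial V K) := by
    rw [isSMulRegular_quotient_iff_mem_of_smul_mem]
    simp only [Submodule.mem_iInf]
    exact fun f hf D hD =>
      (varIdeal_isPrime.mem_or_mem (hf D hD)).resolve_left (sum_X_notMem_varIdeal (h𝓓 D hD))
  refine (LocalProjDimLT.quotSMulTop_iff (Ideal.sum_mem _ fun v hv => X_mem_varIdeal.mpr hv)
    hreg).mp (LocalProjDimLT.of_residueField ?_)
  exact (localProjDimLT_quotient_varIdeal_iff subset_rfl).mpr (Nat.lt_succ_self _)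

theorem ncard_le_of_localProjDimLT_quotient_iInf_varIdeal (h𝓓 : 𝓓.Nontrivial)
    (hU : ∀ D ∈ 𝓓, ¬ U ⊆ D) (hunion : 𝓓.Pairwise fun C D => C ∪ D = U) {d : ℕ}
    (h : LocalProjDimLT (varIdeal K U) (MvPolynomial V K ⧸ ⨅ D ∈ 𝓓, varIdeal K D) d) :
    U.ncard ≤ d := by
  obtain ⟨C, hC, D, hD, hCD⟩ := h𝓓
  obtain ⟨N, hN⟩ : ∃ N, U.ncard = N + 1 := Nat.exists_eq_add_one.mpr <|
    ((Set.nonempty_of_not_subset (hU C hC)).mono Set.sdiff_subset).ncard_pos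
  have hinf : ⨅ D ∈ 𝓓, varIdeal K D = varIdeal K C ⊓ ⨅ D ∈ 𝓓 \ {C}, varIdeal K D := by
    rw [← iInf_insert, Set.insert_sdiff_singleton, Set.insert_eq_of_mem hC]
  have hsup : varIdeal K C ⊔ ⨅ D ∈ 𝓓 \ {C}, varIdeal K D = varIdeal K U :=
    varIdeal_sup_iInf_varIdeal ⟨D, hD, hCD.symm⟩ fun E hE => hunion hC hE.1 (Ne.symm hE.2)
  have hCU : LocalProjDimLT (varIdeal K U) (MvPolynomial V K ⧸ varIdeal K C) (N + 1) := by
    rw [← hN, ← iInf_singleton (f := varIdeal K) (b := C)]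
    exact localProjDimLT_quotient_iInf_varIdeal fun E hE => hE ▸ hU C hC
  have hDU : LocalProjDimLT (varIdeal K U)
      (MvPolynomial V K ⧸ ⨅ D ∈ 𝓓 \ {C}, varIdeal K D) (N + 1) :=
    hN ▸ localProjDimLT_quotient_iInf_varIdeal fun E hE => hU E hE.1
  by_contra! hlt
  rw [hinf] at h
  have hUU := LocalProjDimLT.quotient_sup (h.mono (by omega : d ≤ N)) hCU hDU
  rw [hsup, localProjDimLT_quotient_varIdeal_iff subset_rfl] at hUU
  omega

end Connectedness

section MinimalVertexCover

variable {K V : Type} [Field K] {G : SimpleGraph V} {C C' : Set V} {u v : V}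

lemma isMinimalVertexCover_iff_minimal :
    IsMinimalVertexCover G C ↔ Minimal (IsVertexCover G) C := by
  rw [minimal_iff]
  exact and_congr_right fun _ =>
    ⟨fun h C' hC' hle => (h C' hle hC').symm, fun h C' hle hC' => (h hC' hle).symm⟩

lemma IsMinimalVertexCover.eq_of_subset (hC : IsMinimalVertexCover G C)
    (hC' : IsMinimalVertexCover G C') (h : C ⊆ C') : C = C' :=
  hC'.2 C h hC.1

lemma isVertexCover_compl_singleton (u : V) : IsVertexCover G {u}ᶜ := fun a b hab => by
  by_contra! h
  simp only [Set.mem_compl_iff, Set.mem_singleton_iff, not_not] at h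
  exact hab.ne (h.1.trans h.2.symm)

variable [Finite V]

lemma IsVertexCover.exists_isMinimalVertexCover_subset (hC : IsVertexCover G C) :
    ∃ D ⊆ C, IsMinimalVertexCover G D := by
  simp only [isMinimalVertexCover_iff_minimal]
  exact (Set.toFinite {D | IsVertexCover G D}).exists_le_minimal hC

lemma exists_isMinimalVertexCover_ne (huv : G.Adj u v) :
    ∃ C C', IsMinimalVertexCover G C ∧ IsMinimalVertexCover G C' ∧ C ≠ C' := by
  obtain ⟨C, hCu, hC⟩ := (isVertexCover_compl_singleton u).exists_isMinimalVertexCover_subset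
  obtain ⟨C', hCv, hC'⟩ := (isVertexCover_compl_singleton v).exists_isMinimalVertexCover_subset
  refine ⟨C, C', hC, hC', ?_⟩
  rintro rfl
  exact (hC.1 huv).elim (fun hu => hCu hu rfl) fun hv => hCv hv rfl

/- The variables outside `U` are units in the localization at `varIdeal K U`, so only the minimal
covers contained in `U` survive in the primary decomposition of the edge ideal. -/
lemma LocalProjDimLT.quotient_iInf_varIdeal_of_quotient_edgeIdeal {U : Set V} {d : ℕ}
    (h : LocalProjDimLT (varIdeal K U) (MvPolynomial V K ⧸ edgeIdeal K G) d) :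
    LocalProjDimLT (varIdeal K U) (MvPolynomial V K ⧸
      ⨅ D ∈ {D | IsMinimalVertexCover G D ∧ D ⊆ U}, varIdeal K D) d := by
  obtain ⟨W, hW⟩ := (Uᶜ).toFinite.exists_finset_coe
  have hmemW : ∀ w, w ∈ W ↔ w ∉ U := fun w => by rw [← Finset.mem_coe, hW, Set.mem_compl_iff]
  refine h.quotient_of_mul_mem (s := ∏ w ∈ W, X w) ?_ ?_ fun f hf => ?_
  · simp only [varIdeal_isPrime.prod_mem_iff, X_mem_varIdeal, hmemW]
    exact fun ⟨_, hwU, hwU'⟩ => hwU hwU'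
  · exact le_iInf₂ fun D hD => edgeIdeal_le_varIdeal_iff.mpr hD.1.1
  · simp only [Submodule.mem_iInf] at hf
    refine mem_edgeIdeal_iff_forall_isVertexCover.mpr fun C hC => ?_
    by_cases hCU : C ⊆ U
    · obtain ⟨D, hDC, hD⟩ := hC.exists_isMinimalVertexCover_subset
      exact Ideal.mul_mem_left _ _ (varIdeal_mono.mpr hDC (hf D ⟨hD, hDC.trans hCU⟩))
    · obtain ⟨w, hwC, hwU⟩ := Set.not_subset.mp hCU
      exact Ideal.mul_mem_right _ _
        (Ideal.prod_mem _ ((hmemW w).mpr hwU) (X_mem_varIdeal.mpr hwC))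

/- Hartshorne's connectedness argument: localize at `varIdeal K U`, where `U` is minimal among the
unions of two distinct minimal vertex covers. -/
theorem exists_isMinimalVertexCover_ncard_union_le (huv : G.Adj u v) {d : ℕ}
    (h : HasProjectiveDimensionLT
      (ModuleCat.of (MvPolynomial V K) (MvPolynomial V K ⧸ edgeIdeal K G)) (d + 1)) :
    ∃ C C', IsMinimalVertexCover G C ∧ IsMinimalVertexCover G C' ∧ C ≠ C' ∧
      (C ∪ C').ncard ≤ d + 1 := by
  let 𝓤 : Set (Set V) := {U | ∃ C C', IsMinimalVertexCover G C ∧ IsMinimalVertexCover G C' ∧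
    C ≠ C' ∧ C ∪ C' = U}
  obtain ⟨C₀, C₀', hC₀, hC₀', hne₀⟩ := exists_isMinimalVertexCover_ne huv
  obtain ⟨_, ⟨C, C', hC, hC', hne, rfl⟩, hmin⟩ :=
    𝓤.toFinite.exists_minimal ⟨_, C₀, C₀', hC₀, hC₀', hne₀, rfl⟩
  refine ⟨C, C', hC, hC', hne, ncard_le_of_localProjDimLT_quotient_iInf_varIdeal
    (𝓓 := {D | IsMinimalVertexCover G D ∧ D ⊆ C ∪ C'}) ?_ ?_ ?_
    (LocalProjDimLT.of_hasProjectiveDimensionLT h).quotient_iInf_varIdeal_of_quotient_edgeIdeal⟩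
  · exact ⟨C, ⟨hC, Set.subset_union_left⟩, C', ⟨hC', Set.subset_union_right⟩, hne⟩
  · rintro D ⟨hD, -⟩ hUD
    exact hne ((hC.eq_of_subset hD (Set.subset_union_left.trans hUD)).trans
      (hC'.eq_of_subset hD (Set.subset_union_right.trans hUD)).symm)
  · rintro D ⟨hD, hDU⟩ E ⟨hE, hEU⟩ hDE
    exact (Set.union_subset hDU hEU).antisymm
      (hmin ⟨D, E, hD, hE, hDE, rfl⟩ (Set.union_subset hDU hEU))

lemma exists_isVertexCover_insert_of_ncard_union_le (hC : IsMinimalVertexCover G C)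
    (hC' : IsMinimalVertexCover G C') (hne : C ≠ C')
    (hunion : (C ∪ C').ncard ≤ coverNumber G + 1) :
    ∃ (A : Set V) (u v : V), A.ncard + 1 = coverNumber G ∧ G.Adj u v ∧
      IsVertexCover G (insert u A) ∧ IsVertexCover G (insert v A) := by
  have hlt : C.ncard < (C ∪ C').ncard := Set.ncard_lt_ncard
    (Set.ssubset_union_left_iff.mpr fun h => hne (hC'.eq_of_subset hC h).symm)
  have hlt' : C'.ncard < (C ∪ C').ncard := Set.ncard_lt_ncard
    (Set.ssubset_union_right_iff.mpr fun h => hne (hC.eq_of_subset hC' h))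
  have hle := coverNumber_le hC.1
  have hle' := coverNumber_le hC'.1
  have hinter := Set.ncard_union_add_ncard_inter C C'
  have hA : (C ∩ C').ncard + 1 = coverNumber G := by omega
  have hinsert : ∀ E w, E.ncard = coverNumber G → C ∩ C' ⊆ E → w ∈ E → w ∉ C ∩ C' →
      insert w (C ∩ C') = E := fun E w hE hsub hwE hw =>
    Set.eq_of_subset_of_ncard_le (Set.insert_subset hwE hsub)
      (by rw [Set.ncard_insert_of_notMem hw, hA, hE])
  obtain ⟨u, v, huv, hu, hv, huC⟩ : ∃ u v, G.Adj u v ∧ u ∉ C ∩ C' ∧ v ∉ C ∩ C' ∧ u ∈ C := by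
    have hnot : ¬ IsVertexCover G (C ∩ C') := fun h => by
      have := coverNumber_le h
      omega
    simp only [IsVertexCover, not_forall, not_or] at hnot
    obtain ⟨u, v, huv, hu, hv⟩ := hnot
    rcases hC.1 huv with huC | hvC
    exacts [⟨u, v, huv, hu, hv, huC⟩, ⟨v, u, huv.symm, hv, hu, hvC⟩]
  have hvC' : v ∈ C' := (hC'.1 huv).resolve_left fun h => hu ⟨huC, h⟩
  refine ⟨C ∩ C', u, v, hA, huv, ?_, ?_⟩
  · rw [hinsert C u (by omega) Set.inter_subset_left huC hu]
    exact hC.1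
  · rw [hinsert C' v (by omega) Set.inter_subset_right hvC' hv]
    exact hC'.1

theorem vNumber_coverIdeal_add_one_of_hasProjectiveDimensionLT (huv : G.Adj u v)
    (h : HasProjectiveDimensionLT
      (ModuleCat.of (MvPolynomial V K) (MvPolynomial V K ⧸ edgeIdeal K G)) (coverNumber G + 1)) :
    vNumber (coverIdeal K G) + 1 = coverNumber G := by
  obtain ⟨C, C', hC, hC', hne, hunion⟩ := exists_isMinimalVertexCover_ncard_union_le huv h
  obtain ⟨A, u, v, hA, huv, hu, hv⟩ :=
    exists_isVertexCover_insert_of_ncard_union_le hC hC' hne hunion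
  rw [vNumber_coverIdeal_eq_ncard hA huv hu hv, hA]

end MinimalVertexCover

section CohenMacaulay

variable {K V : Type} [Field K] [Finite V] {G : SimpleGraph V} {u v : V}

lemma mdepth_eq_ringKrullDim_iff_projDim_eq_coverNumber :
    ((mdepth (maxIdeal K V) (MvPolynomial V K ⧸ edgeIdeal K G) : ℕ) : WithBot (WithTop ℕ)) =
      ringKrullDim (MvPolynomial V K ⧸ edgeIdeal K G) ↔
    projDim (MvPolynomial V K)
      (ModuleCat.of (MvPolynomial V K) (MvPolynomial V K ⧸ edgeIdeal K G)) = coverNumber G := by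
  have hformula := projDim_add_mdepth_quotient (edgeIdeal_isHomogeneous (K := K) (G := G))
    edgeIdeal_ne_top
  have hle : coverNumber G ≤ Nat.card V := by
    obtain ⟨C, -, hC⟩ := exists_isVertexCover_ncard_eq_coverNumber G
    exact hC ▸ Set.ncard_le_card C
  have hcast : ∀ a b : ℕ, ((a : ℕ) : WithBot (WithTop ℕ)) = ((b : ℕ) : WithBot ℕ∞) ↔ a = b :=
    fun a b => Nat.cast_inj (R := WithBot ℕ∞)
  rw [ringKrullDim_quotient_edgeIdeal, hcast]
  omega

lemma one_le_coverNumber (huv : G.Adj u v) : 1 ≤ coverNumber G := by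
  obtain ⟨C, hC, hcard⟩ := exists_isVertexCover_ncard_eq_coverNumber G
  exact hcard ▸ (Set.ncard_pos).mpr ((hC huv).elim (fun hu => ⟨u, hu⟩) fun hv => ⟨v, hv⟩)

end CohenMacaulay

theorem cohenMacaulay_iff_vNumber_coverIdeal_general {K V : Type} [Field K] [Finite V]
    (G : SimpleGraph V) (hE : G.edgeSet.Nonempty) :
    ((mdepth (maxIdeal K V) (MvPolynomial V K ⧸ edgeIdeal K G) : ℕ) : WithBot (WithTop ℕ)) =
      ringKrullDim (MvPolynomial V K ⧸ edgeIdeal K G) ↔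
    (vNumber (coverIdeal K G) =
        projDim (MvPolynomial V K)
          (ModuleCat.of (MvPolynomial V K) (MvPolynomial V K ⧸ edgeIdeal K G)) - 1 ∧
      projDim (MvPolynomial V K)
          (ModuleCat.of (MvPolynomial V K) (MvPolynomial V K ⧸ edgeIdeal K G)) - 1 =
        coverNumber G - 1) := by
  obtain ⟨u, v, huv⟩ := SimpleGraph.ne_bot_iff_exists_adj.mp (SimpleGraph.edgeSet_nonempty.mp hE)
  have hpd := one_le_projDim_quotient (edgeIdeal_isHomogeneous (K := K) (G := G))
    edgeIdeal_ne_top (edgeIdeal_ne_bot huv)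
  have hcover := one_le_coverNumber huv
  rw [mdepth_eq_ringKrullDim_iff_projDim_eq_coverNumber]
  constructor
  · intro hpd_eq
    have hv := vNumber_coverIdeal_add_one_of_hasProjectiveDimensionLT huv
      (hpd_eq ▸ hasProjectiveDimensionLT_projDim_quotient (edgeIdeal_isHomogeneous (K := K))
        edgeIdeal_ne_top)
    omega
  · rintro ⟨-, hpd_eq⟩
    omega

/-- `R/I(G)` is Cohen–Macaulay (depth equals Krull dimension) if and only if
`v(J(G)) = pd(R/I(G)) - 1 = α₀(G) - 1`. -/
theorem cohenMacaulay_iff_vNumber_coverIdeal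
    {K : Type} [Field K] {n : ℕ} (hn : 1 ≤ n) (G : SimpleGraph (Fin n))
    (hE : G.edgeSet.Nonempty) :
    ((mdepth (maxIdeal K (Fin n))
        (MvPolynomial (Fin n) K ⧸ edgeIdeal K G) : ℕ) : WithBot (WithTop ℕ)) =
      ringKrullDim (MvPolynomial (Fin n) K ⧸ edgeIdeal K G) ↔
    (vNumber (coverIdeal K G) =
        projDim (MvPolynomial (Fin n) K)
          (ModuleCat.of (MvPolynomial (Fin n) K)
            (MvPolynomial (Fin n) K ⧸ edgeIdeal K G)) - 1 ∧
      projDim (MvPolynomial (Fin n) K)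
          (ModuleCat.of (MvPolynomial (Fin n) K)
            (MvPolynomial (Fin n) K ⧸ edgeIdeal K G)) - 1 =
        coverNumber G - 1) :=
  cohenMacaulay_iff_vNumber_coverIdeal_general G hE

end
end

section
/- For every positive integer k there exists a connected finite simple graph G_k (on 6k + 1 vertices) such that pd_R(R/I(G_k)) − 1 − v(J(G_k)) = k, where R is the polynomial ring over a field K in the vertices of G_k. (By Terai's formula, pd_R(R/I(G_k)) − 1 = reg(R/J(G_k)), so reg(R/J(G_k)) − v(J(G_k)) = k.) -/
open MvPolynomial CategoryTheory

noncomputable section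

/-!
For a graph `G` on `n ≥ 2` vertices the projective dimension of `R/I(G)` is at most `n - 1`: colon
sequences `0 → R/(I : x_w) → R/I → R/(I + (x_w)) → 0` reduce it to quotients by ideals generated by
at most `n - 1` variables. A vertex `w` joined to all others gives equality, since then
`I(G) : x_w` is generated by the `n - 1` other variables.

A prime ideal of the form `J(G) : f` is `⟨x_u, x_v⟩` for an edge `{u, v}`, and `f` may be replaced
by a squarefree monomial whose support meets every edge except `{u, v}`. So `v(J(G))` is the least
size of such a set, and for the cone over a star with `t` leaves and some isolated vertices
it is `t`. The number of isolated vertices thus changes `pd(R/I(G)) - 1 - v(J(G))` at will.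
-/

section ProjectiveDimension

universe u

/-- The derived functor `Ext` and the `Ext` groups of the derived category can both be computed by
the same projective resolution. -/
theorem subsingleton_Ext_obj_succ_iff {R : Type*} [Ring R] {C : Type*} [Category* C] [Abelian C]
    [Linear R C] [EnoughProjectives C] [HasExt C] (X Y : C) (n : ℕ) :
    Subsingleton (((Ext R C (n + 1)).obj (Opposite.op X)).obj Y) ↔
      Subsingleton (Abelian.Ext X Y (n + 1)) := by
  let P := projectiveResolution X
  rw [(P.isoExt (R := R) (n + 1) Y).toLinearEquiv.toEquiv.subsingleton_congr,
    ← ModuleCat.isZero_iff_subsingleton, ← HomologicalComplex.exactAt_iff_isZero_homology,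
    HomologicalComplex.exactAt_iff' _ n (n + 1) (n + 2) (by simp) (by simp),
    ShortComplex.moduleCat_exact_iff]
  constructor
  · refine fun exact ↦ subsingleton_of_forall_eq 0 fun α ↦ ?_
    obtain ⟨f, hf, rfl⟩ := P.extMk_surjective α (n + 2) rfl
    exact (P.extMk_eq_zero_iff f _ rfl hf n rfl).2 (exact f hf)
  · exact fun _ f hf ↦ (P.extMk_eq_zero_iff f (n + 2) rfl hf n rfl).1 (Subsingleton.elim _ _)

theorem forall_subsingleton_Ext_iff_hasProjectiveDimensionLE {R : Type} [CommRing R]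
    (M : ModuleCat.{0} R) (d : ℕ) :
    (∀ (N : ModuleCat.{0} R) (i : ℕ), d < i →
      Subsingleton (((Ext R (ModuleCat.{0} R) i).obj (Opposite.op M)).obj N)) ↔
      HasProjectiveDimensionLE M d := by
  constructor
  · refine fun h ↦ (hasProjectiveDimensionLT_iff M (d + 1)).2 ?_
    rintro (_ | i) hi N e
    · omega
    · have := (subsingleton_Ext_obj_succ_iff M N i).1 (h N (i + 1) hi)
      exact Subsingleton.elim _ _
  · rintro h N (_ | i) hi
    · omega
    · exact (subsingleton_Ext_obj_succ_iff M N i).2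
        (HasProjectiveDimensionLT.subsingleton M (d + 1) (i + 1) hi N)

theorem projDim_eq_of_projectiveDimension_eq {R : Type} [CommRing R] {M : ModuleCat.{0} R} {d : ℕ}
    (hM : projectiveDimension M = d) : projDim R M = d := by
  unfold projDim
  simp only [forall_subsingleton_Ext_iff_hasProjectiveDimensionLE, ← projectiveDimension_le_iff,
    hM, Nat.cast_le]
  exact isLeast_Ici.csInf_eq

variable {R : Type u} [CommRing R]

/-- The cyclic module `R ⧸ I` as an object of the category of `R`-modules. -/
abbrev cyclicModule (I : Ideal R) : ModuleCat.{u} R := ModuleCat.of R (R ⧸ I)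

/-- The complex `0 → R/(I : x) → R/I → R/(I + (x)) → 0`, whose first map is multiplication by `x`.
It relates the projective dimensions of `R/I`, `R/(I : x)` and `R/(I + (x))`. -/
def colonShortComplex (I : Ideal R) (x : R) : ShortComplex (ModuleCat.{u} R) where
  X₁ := cyclicModule (I.colon {x})
  X₂ := cyclicModule I
  X₃ := cyclicModule (I ⊔ Ideal.span {x})
  f := ModuleCat.ofHom <| Submodule.mapQ _ I (LinearMap.toSpanSingleton R R x)
    fun _ ↦ Submodule.mem_colon_singleton.1
  g := ModuleCat.ofHom <| Submodule.mapQ I _ LinearMap.id fun _ ↦ Ideal.mem_sup_left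
  zero := by
    refine ModuleCat.hom_ext (LinearMap.ext fun r ↦ ?_)
    obtain ⟨r, rfl⟩ := Submodule.Quotient.mk_surjective _ r
    exact (Submodule.Quotient.mk_eq_zero _).2
      (Ideal.mem_sup_right (Ideal.mul_mem_left _ r (Ideal.mem_span_singleton_self x)))

theorem colonShortComplex_shortExact (I : Ideal R) (x : R) :
    (colonShortComplex I x).ShortExact where
  exact := by
    refine (ShortComplex.moduleCat_exact_iff _).2 fun r hr ↦ ?_
    obtain ⟨r, rfl⟩ := Submodule.Quotient.mk_surjective _ r
    obtain ⟨a, ha, b, hb, rfl⟩ := Submodule.mem_sup.1 ((Submodule.Quotient.mk_eq_zero _).1 hr)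
    obtain ⟨c, rfl⟩ := Ideal.mem_span_singleton'.1 hb
    refine ⟨(Submodule.Quotient.mk c : R ⧸ I.colon {x}), (Submodule.Quotient.eq I).2 ?_⟩
    simpa using ha
  mono_f := by
    refine (ModuleCat.mono_iff_injective _).2
      ((injective_iff_map_eq_zero (colonShortComplex I x).f.hom).2 fun r hr ↦ ?_)
    obtain ⟨r, rfl⟩ := Submodule.Quotient.mk_surjective _ r
    exact (Submodule.Quotient.mk_eq_zero _).2
      (Submodule.mem_colon_singleton.2 ((Submodule.Quotient.mk_eq_zero _).1 hr))
  epi_g := by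
    refine (ModuleCat.epi_iff_surjective _).2 fun r ↦ ?_
    obtain ⟨r, rfl⟩ := Submodule.Quotient.mk_surjective _ r
    exact ⟨(Submodule.Quotient.mk r : R ⧸ I), rfl⟩

theorem smul_ext_eq_zero_of_mem_annihilator {M N : ModuleCat.{u} R} {x : R}
    (hx : x ∈ Module.annihilator R N) {n : ℕ} (e : Abelian.Ext M N n) : x • e = 0 := by
  have smul_id : x • 𝟙 N = 0 := by
    ext y
    exact Module.mem_annihilator.1 hx y
  simp [Abelian.Ext.smul_eq_comp_mk₀, smul_id]

/-- Multiplication by `x` is zero on `Ext(-, N)`, so the connecting map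
`Ext^n(R/I, N) → Ext^(n+1)(R/(I + (x)), N)` is injective. -/
theorem nontrivial_ext_sup_span_singleton {I : Ideal R} {x : R} (hI : I.colon {x} = I)
    {N : ModuleCat.{u} R} (hx : x ∈ Module.annihilator R N) (n : ℕ)
    [Nontrivial (Abelian.Ext (cyclicModule I) N n)] :
    Nontrivial (Abelian.Ext (cyclicModule (I ⊔ Ideal.span {x})) N (1 + n)) := by
  have : Nontrivial (Abelian.Ext (colonShortComplex I x).X₁ N n) := by
    change Nontrivial (Abelian.Ext (cyclicModule (I.colon {x})) N n)
    rwa [hI]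
  let p : (colonShortComplex I x).X₁ ⟶ (colonShortComplex I x).X₂ :=
    ModuleCat.ofHom (Submodule.mapQ _ _ LinearMap.id hI.le)
  have f_eq : (colonShortComplex I x).f = x • p := by
    ext r
    obtain ⟨r, rfl⟩ := Submodule.Quotient.mk_surjective _ r
    exact congrArg (Submodule.Quotient.mk (p := I)) (mul_comm r x)
  obtain ⟨e, he⟩ := exists_ne (0 : Abelian.Ext (colonShortComplex I x).X₁ N n)
  refine nontrivial_of_ne ((colonShortComplex_shortExact I x).extClass.comp e rfl) 0 fun h ↦ he ?_
  obtain ⟨y, rfl⟩ := Abelian.Ext.contravariant_sequence_exact₁ _ _ e rfl h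
  rw [f_eq, Abelian.Ext.mk₀_smul, Abelian.Ext.smul_comp]
  exact smul_ext_eq_zero_of_mem_annihilator hx _

end ProjectiveDimension

section VariableIdeals

universe u

variable {K V : Type u}

/-- The prime `⟨x_i : i ∈ S⟩` generated by the variables in `S`. -/
def variableIdeal (K : Type u) [CommRing K] (S : Set V) : Ideal (MvPolynomial V K) :=
  Ideal.span (X '' S)

section CommRing

variable [CommRing K]

theorem mem_variableIdeal_iff {S : Set V} {r : MvPolynomial V K} :
    r ∈ variableIdeal K S ↔ ∀ m ∈ r.support, ∃ i ∈ S, m i ≠ 0 :=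
  mem_ideal_span_X_image

theorem X_mem_variableIdeal {S : Set V} {i : V} (hi : i ∈ S) : X i ∈ variableIdeal K S :=
  Ideal.subset_span ⟨i, hi, rfl⟩

theorem variableIdeal_le_iff {S : Set V} {I : Ideal (MvPolynomial V K)} :
    variableIdeal K S ≤ I ↔ ∀ i ∈ S, X i ∈ I := by
  rw [variableIdeal, Ideal.span_le, Set.image_subset_iff]
  rfl

theorem variableIdeal_empty : variableIdeal K (∅ : Set V) = ⊥ := by
  simp [variableIdeal]

theorem variableIdeal_insert (i : V) (S : Set V) :
    variableIdeal K (insert i S) = variableIdeal K S ⊔ Ideal.span {X i} := by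
  rw [variableIdeal, variableIdeal, Set.image_insert_eq, Ideal.span_insert, sup_comm]

theorem variableIdeal_colon_X {S : Set V} {i : V} (hi : i ∉ S) :
    (variableIdeal K S).colon {X i} = variableIdeal K S := by
  refine le_antisymm (fun r hr ↦ ?_) Ideal.le_colon
  rw [Submodule.mem_colon_singleton, smul_eq_mul, mul_comm, mem_variableIdeal_iff] at hr
  rw [mem_variableIdeal_iff]
  intro m hm
  obtain ⟨j, hj, hmj⟩ := hr (Finsupp.single i 1 + m)
    (by rw [support_X_mul]; exact Finset.mem_map_of_mem _ hm)
  exact ⟨j, hj, by simpa [Finsupp.single_apply, ne_of_mem_of_not_mem hj hi |>.symm] using hmj⟩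

theorem hasProjectiveDimensionLE_variableIdeal {S : Set V} (hS : S.Finite) :
    HasProjectiveDimensionLE (cyclicModule (variableIdeal K S)) S.ncard := by
  induction S, hS using Set.Finite.induction_on with
  | empty =>
    rw [Set.ncard_empty, ← projective_iff_hasProjectiveDimensionLE_zero, variableIdeal_empty]
    have : Module.Projective (MvPolynomial V K) (MvPolynomial V K ⧸ (⊥ : Ideal _)) :=
      .of_equiv (Submodule.quotEquivOfEqBot _ rfl).symm
    exact (IsProjective.iff_projective _).1 this
  | @insert i S hi hS ih =>
    rw [Set.ncard_insert_of_notMem hi hS, variableIdeal_insert]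
    refine (colonShortComplex_shortExact _ _).hasProjectiveDimensionLT_X₃ (S.ncard + 1) ?_
      (@hasProjectiveDimensionLT_of_ge _ _ _ _ (S.ncard + 1) _ (by omega) ih)
    change HasProjectiveDimensionLE (cyclicModule ((variableIdeal K S).colon {X i})) S.ncard
    rwa [variableIdeal_colon_X hi]

theorem nontrivial_ext_variableIdeal {S : Set V} (hS : S.Finite)
    {N : ModuleCat.{u} (MvPolynomial V K)} [Nontrivial N]
    (hN : variableIdeal K S ≤ Module.annihilator (MvPolynomial V K) N) :
    Nontrivial (Abelian.Ext (cyclicModule (variableIdeal K S)) N S.ncard) := by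
  induction S, hS using Set.Finite.induction_on with
  | empty =>
    obtain ⟨y, hy⟩ := exists_ne (0 : N)
    rw [Set.ncard_empty, variableIdeal_empty]
    let φ : (MvPolynomial V K ⧸ (⊥ : Ideal (MvPolynomial V K))) →ₗ[MvPolynomial V K] N :=
      Submodule.liftQ ⊥ (LinearMap.toSpanSingleton _ N y) bot_le
    refine nontrivial_of_ne (Abelian.Ext.mk₀ (ModuleCat.ofHom φ)) 0 fun h ↦ hy ?_
    have φ_one : φ (Submodule.Quotient.mk 1) = y := one_smul (MvPolynomial V K) y
    have φ_eq : φ = 0 := congrArg ModuleCat.Hom.hom ((Abelian.Ext.mk₀_eq_zero_iff _).1 h)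
    rw [← φ_one, φ_eq, LinearMap.zero_apply]
  | @insert i S hi hS ih =>
    rw [variableIdeal_insert] at hN
    have := ih (le_sup_left.trans hN)
    rw [Set.ncard_insert_of_notMem hi hS, variableIdeal_insert, add_comm]
    exact nontrivial_ext_sup_span_singleton (variableIdeal_colon_X hi)
      (hN (Ideal.mem_sup_right (Ideal.mem_span_singleton_self _))) _

variable [Nontrivial K]

theorem X_mem_variableIdeal_iff {S : Set V} {i : V} : X i ∈ variableIdeal K S ↔ i ∈ S := by
  refine ⟨fun h ↦ ?_, X_mem_variableIdeal⟩
  obtain ⟨j, hj, hij⟩ := mem_variableIdeal_iff.1 h (Finsupp.single i 1) (by simp)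
  rwa [(Finsupp.single_apply_ne_zero.1 hij).1.symm]

theorem variableIdeal_le_variableIdeal_iff {S T : Set V} :
    variableIdeal K S ≤ variableIdeal K T ↔ S ⊆ T := by
  simp only [variableIdeal_le_iff, X_mem_variableIdeal_iff, Set.subset_def]

theorem variableIdeal_ne_top (S : Set V) : variableIdeal K S ≠ ⊤ := by
  rw [Ideal.ne_top_iff_one, mem_variableIdeal_iff]
  intro h
  obtain ⟨i, -, hi⟩ := h 0 (by simp)
  exact hi rfl

theorem projectiveDimension_variableIdeal {S : Set V} (hS : S.Finite) :
    projectiveDimension (cyclicModule (variableIdeal K S)) = S.ncard := by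
  refine le_antisymm
    ((projectiveDimension_le_iff _ _).2 (hasProjectiveDimensionLE_variableIdeal hS))
    ((projectiveDimension_ge_iff _ _).2 fun _ ↦ ?_)
  have : Nontrivial (MvPolynomial V K ⧸ variableIdeal K S) :=
    Ideal.Quotient.nontrivial_iff.2 (variableIdeal_ne_top S)
  have := nontrivial_ext_variableIdeal (N := cyclicModule (variableIdeal K S)) hS
    (Ideal.annihilator_quotient).ge
  exact not_subsingleton _ (HasProjectiveDimensionLT.subsingleton
    (cyclicModule (variableIdeal K S)) S.ncard S.ncard le_rfl (cyclicModule (variableIdeal K S)))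

end CommRing

variable [CommRing K] [IsDomain K]

/-- `⟨x_i : i ∈ S⟩` is the kernel of the substitution `x_i ↦ 0` for `i ∈ S`. -/
theorem variableIdeal_isPrime (S : Set V) : (variableIdeal K S).IsPrime := by
  classical
  let φ : MvPolynomial V K →ₐ[K] MvPolynomial V K := aeval fun i ↦ if i ∈ S then 0 else X i
  suffices h : variableIdeal K S = RingHom.ker φ from h ▸ RingHom.ker_isPrime φ
  refine le_antisymm (variableIdeal_le_iff.2 fun i hi ↦ by simp [φ, RingHom.mem_ker, hi])
    fun f hf ↦ ?_
  have mk_comp : (Ideal.Quotient.mkₐ K (variableIdeal K S)).comp φ = Ideal.Quotient.mkₐ K _ := by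
    refine algHom_ext fun i ↦ ?_
    by_cases hi : i ∈ S
    · simpa [φ, hi] using (Ideal.Quotient.eq_zero_iff_mem.2 (X_mem_variableIdeal hi)).symm
    · simp [φ, hi]
  rw [← Ideal.Quotient.eq_zero_iff_mem, ← Ideal.Quotient.mkₐ_eq_mk K, ← mk_comp, AlgHom.comp_apply,
    (RingHom.mem_ker).1 hf, map_zero]

theorem prod_X_mem_variableIdeal_iff {A : Finset V} {S : Set V} :
    ∏ i ∈ A, X i ∈ variableIdeal K S ↔ ∃ i ∈ A, i ∈ S := by
  have := variableIdeal_isPrime (K := K) S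
  simp only [Ideal.IsPrime.prod_mem_iff, X_mem_variableIdeal_iff]

end VariableIdeals


section EdgeIdeals

variable {K : Type} [Field K] {V : Type} {G : SimpleGraph V}

theorem edgeIdeal_le_variableIdeal {S : Set V} (hS : IsVertexCover G S) :
    edgeIdeal K G ≤ variableIdeal K S := by
  refine Ideal.span_le.2 ?_
  rintro _ ⟨u, v, huv, rfl⟩
  rcases hS huv with hu | hv
  · exact Ideal.mul_mem_right _ _ (X_mem_variableIdeal hu)
  · exact Ideal.mul_mem_left _ _ (X_mem_variableIdeal hv)

theorem single_one_add_single_one_le_iff {u v : V} (huv : u ≠ v) {m : V →₀ ℕ} :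
    Finsupp.single u 1 + Finsupp.single v 1 ≤ m ↔ m u ≠ 0 ∧ m v ≠ 0 := by
  classical
  simp only [Finsupp.le_def, Finsupp.add_apply, Finsupp.single_apply]
  constructor
  · intro h
    have := h u
    have := h v
    grind
  · grind

theorem mem_edgeIdeal_sup_variableIdeal_iff {S : Set V} {r : MvPolynomial V K} :
    r ∈ edgeIdeal K G ⊔ variableIdeal K S ↔ ∀ m ∈ r.support,
      (∃ i ∈ S, m i ≠ 0) ∨ ∃ u v, G.Adj u v ∧ m u ≠ 0 ∧ m v ≠ 0 := by
  let generators : Set (V →₀ ℕ) := (fun i ↦ Finsupp.single i 1) '' S ∪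
    {m | ∃ u v, G.Adj u v ∧ m = Finsupp.single u 1 + Finsupp.single v 1}
  have span_generators : edgeIdeal K G ⊔ variableIdeal K S =
      Ideal.span ((fun m ↦ monomial m 1) '' generators) := by
    rw [sup_comm, edgeIdeal, variableIdeal, ← Ideal.span_union, Set.image_union, Set.image_image]
    congr 2
    ext p
    simp only [Set.mem_ofPred_eq, Set.mem_image]
    constructor
    · rintro ⟨u, v, huv, rfl⟩
      exact ⟨_, ⟨u, v, huv, rfl⟩, by simp [X, monomial_mul]⟩
    · rintro ⟨_, ⟨u, v, huv, rfl⟩, rfl⟩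
      exact ⟨u, v, huv, by simp [X, monomial_mul]⟩
  have single_le {u : V} {m : V →₀ ℕ} : Finsupp.single u 1 ≤ m ↔ m u ≠ 0 := by
    rw [Finsupp.single_le_iff, Nat.one_le_iff_ne_zero]
  rw [span_generators, mem_ideal_span_monomial_image]
  refine forall₂_congr fun m _ ↦ ?_
  simp only [generators, Set.mem_union, or_and_right, exists_or, Set.exists_mem_image, single_le]
  refine or_congr_right ?_
  constructor
  · rintro ⟨_, ⟨u, v, huv, rfl⟩, h⟩
    exact ⟨u, v, huv, (single_one_add_single_one_le_iff huv.ne).1 h⟩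
  · rintro ⟨u, v, huv, h⟩
    exact ⟨_, ⟨u, v, huv, rfl⟩, (single_one_add_single_one_le_iff huv.ne).2 h⟩

theorem colon_X_edgeIdeal_sup_variableIdeal {S : Set V} {w : V} (hw : w ∉ S) :
    (edgeIdeal K G ⊔ variableIdeal K S).colon {X w} =
      edgeIdeal K G ⊔ variableIdeal K (S ∪ G.neighborSet w) := by
  refine le_antisymm (fun r hr ↦ ?_) (sup_le (le_sup_left.trans Ideal.le_colon) ?_)
  · rw [Submodule.mem_colon_singleton, smul_eq_mul, mul_comm,
      mem_edgeIdeal_sup_variableIdeal_iff] at hr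
    rw [mem_edgeIdeal_sup_variableIdeal_iff]
    intro m hm
    have add_w_eq {i : V} (hi : i ≠ w) : (Finsupp.single w 1 + m : V →₀ ℕ) i = m i := by
      simp [hi.symm]
    rcases hr (Finsupp.single w 1 + m)
        (by rw [support_X_mul]; exact Finset.mem_map_of_mem _ hm) with
      ⟨i, hi, hmi⟩ | ⟨u, v, huv, hmu, hmv⟩
    · exact .inl ⟨i, .inl hi, by rwa [add_w_eq (ne_of_mem_of_not_mem hi hw)] at hmi⟩
    · by_cases hu : u = w
      · subst hu
        exact .inl ⟨v, .inr huv, by rwa [add_w_eq huv.ne'] at hmv⟩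
      by_cases hv : v = w
      · subst hv
        exact .inl ⟨u, .inr huv.symm, by rwa [add_w_eq hu] at hmu⟩
      exact .inr ⟨u, v, huv, by rwa [add_w_eq hu] at hmu, by rwa [add_w_eq hv] at hmv⟩
  · refine variableIdeal_le_iff.2 fun i hi ↦ Submodule.mem_colon_singleton.2 ?_
    rcases hi with hi | hi
    · exact Ideal.mem_sup_right (Ideal.mul_mem_right _ _ (X_mem_variableIdeal hi))
    · exact Ideal.mem_sup_left (Ideal.subset_span ⟨i, w, hi.symm, rfl⟩)

/-- Splitting off a vertex `w` of an edge `{w, z}` that `S` does not meet, the two outer ideals of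
the colon sequence omit the variables `x_w` and `x_z` respectively. -/
theorem hasProjectiveDimensionLT_edgeIdeal_sup_variableIdeal [Finite V] {S : Set V}
    (hS : S ≠ Set.univ) :
    HasProjectiveDimensionLT (cyclicModule (edgeIdeal K G ⊔ variableIdeal K S)) (Nat.card V) := by
  induction S using (measure fun S : Set V ↦ Sᶜ.ncard).wf.induction with | _ S ih
  by_cases cover : IsVertexCover G S
  · rw [sup_eq_right.2 (edgeIdeal_le_variableIdeal cover)]
    exact @hasProjectiveDimensionLT_of_ge _ _ _ _ _ _ (Set.ncard_lt_card hS)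
      (hasProjectiveDimensionLE_variableIdeal S.toFinite)
  obtain ⟨w, z, hwz, hw, hz⟩ : ∃ w z, G.Adj w z ∧ w ∉ S ∧ z ∉ S := by
    simpa [IsVertexCover] using cover
  have ih' : ∀ T : Set V, S ⊂ T → T ≠ Set.univ → HasProjectiveDimensionLT
      (cyclicModule (edgeIdeal K G ⊔ variableIdeal K T)) (Nat.card V) := fun T hST ↦
    ih T (Set.ncard_lt_ncard (compl_lt_compl_iff_lt.2 hST))
  refine (colonShortComplex_shortExact _ (X w)).hasProjectiveDimensionLT_X₂ _ ?_ ?_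
  · change HasProjectiveDimensionLT (cyclicModule
      ((edgeIdeal K G ⊔ variableIdeal K S).colon {X w})) _
    rw [colon_X_edgeIdeal_sup_variableIdeal hw]
    refine ih' _ ⟨Set.subset_union_left, fun h ↦ hz (h (.inr hwz))⟩
      ((Set.ne_univ_iff_exists_notMem _).2 ⟨w, ?_⟩)
    simp [hw]
  · change HasProjectiveDimensionLT (cyclicModule
      (edgeIdeal K G ⊔ variableIdeal K S ⊔ Ideal.span {X w})) _
    rw [sup_assoc, ← variableIdeal_insert]
    exact ih' _ (Set.ssubset_insert hw)
      ((Set.ne_univ_iff_exists_notMem _).2 ⟨z, by simp [hz, hwz.ne']⟩)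

theorem hasProjectiveDimensionLT_edgeIdeal [Finite V] [Nonempty V] :
    HasProjectiveDimensionLT (cyclicModule (edgeIdeal K G)) (Nat.card V) := by
  simpa [variableIdeal_empty] using
    hasProjectiveDimensionLT_edgeIdeal_sup_variableIdeal (K := K) (G := G) (S := ∅)
      Set.empty_ne_univ

theorem colon_X_edgeIdeal_of_isUniversal {w : V} (hw : G.IsUniversal w) :
    (edgeIdeal K G).colon {X w} = variableIdeal K {w}ᶜ := by
  have cover : IsVertexCover G {w}ᶜ := fun u v huv ↦ by
    by_contra! ⟨hu, hv⟩
    exact huv.ne ((not_not.1 hu).trans (not_not.1 hv).symm)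
  simpa [variableIdeal_empty, hw.neighborSet_eq, edgeIdeal_le_variableIdeal cover] using
    colon_X_edgeIdeal_sup_variableIdeal (K := K) (G := G) (Set.notMem_empty w)

theorem projectiveDimension_edgeIdeal_of_isUniversal [Finite V] [Nontrivial V] {w : V}
    (hw : G.IsUniversal w) :
    projectiveDimension (cyclicModule (edgeIdeal K G)) = ↑(Nat.card V - 1) := by
  have card_eq : Nat.card V - 1 + 1 = Nat.card V := Nat.sub_add_cancel Nat.card_pos
  have pd_colon : projectiveDimension (cyclicModule ((edgeIdeal K G).colon {X w})) =
      ↑(Nat.card V - 1) := by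
    rw [colon_X_edgeIdeal_of_isUniversal hw, projectiveDimension_variableIdeal (Set.toFinite _),
      Set.ncard_compl, Set.ncard_singleton]
  have pd_sup : HasProjectiveDimensionLT
      (cyclicModule (edgeIdeal K G ⊔ Ideal.span {X w})) (Nat.card V - 1 + 1) := by
    simpa [card_eq, variableIdeal] using
      hasProjectiveDimensionLT_edgeIdeal_sup_variableIdeal (K := K) (G := G)
        (Set.singleton_ne_univ w)
  refine le_antisymm ((projectiveDimension_le_iff _ _).2 ?_)
    ((projectiveDimension_ge_iff _ _).2 fun h ↦ (projectiveDimension_ge_iff _ _).1 pd_colon.ge ?_)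
  · rw [HasProjectiveDimensionLE, card_eq]
    exact hasProjectiveDimensionLT_edgeIdeal
  · exact (colonShortComplex_shortExact _ (X w)).hasProjectiveDimensionLT_X₁ _ h pd_sup

end EdgeIdeals

section CoverIdeals

variable {K : Type} [Field K] {V : Type} {G : SimpleGraph V}

/-- `A` meets every pair of adjacent vertices except the edge `{u, v}`, which it misses. In the
degree count for the v-number of the cover ideal, `A` is the support of a monomial `f` with
`J(G) : f = ⟨x_u, x_v⟩`. -/
def IsCoverExcept (G : SimpleGraph V) (u v : V) (A : Finset V) : Prop :=
  ∀ ⦃a b⦄, G.Adj a b ∧ a ∉ A ∧ b ∉ A ↔ s(a, b) = s(u, v)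

theorem IsCoverExcept.adj {u v : V} {A : Finset V} (h : IsCoverExcept G u v A) : G.Adj u v :=
  (h.2 rfl).1

theorem mem_colon_coverIdeal_iff {f r : MvPolynomial V K} :
    r ∈ (coverIdeal K G).colon (Ideal.span {f}) ↔ ∀ u v, G.Adj u v →
      f ∉ variableIdeal K {u, v} → r ∈ variableIdeal K {u, v} := by
  have coverIdeal_eq : coverIdeal K G = ⨅ (u) (v) (_ : G.Adj u v), variableIdeal K {u, v} := by
    simp only [coverIdeal, variableIdeal, Set.image_pair]
  simp only [Ideal.mem_colon_span_singleton, coverIdeal_eq, Submodule.mem_iInf]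
  refine forall₃_congr fun u v _ ↦ ?_
  rw [(variableIdeal_isPrime _).mul_mem_iff_mem_or_mem, or_iff_not_imp_right]

theorem colon_coverIdeal_prod_X {u v : V} {A : Finset V} (h : IsCoverExcept G u v A) :
    (coverIdeal K G).colon (Ideal.span {∏ i ∈ A, X i} : Ideal (MvPolynomial V K)) =
      variableIdeal K {u, v} := by
  ext r
  have prod_notMem_iff {a b : V} : ∏ i ∈ A, X i ∉ variableIdeal K {a, b} ↔ a ∉ A ∧ b ∉ A := by
    rw [prod_X_mem_variableIdeal_iff]
    grind
  simp only [mem_colon_coverIdeal_iff, prod_notMem_iff]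
  constructor
  · exact fun hr ↦ hr u v h.adj (h.2 rfl).2
  · intro hr a b hab hA
    rcases Sym2.eq_iff.1 (h.1 ⟨hab, hA⟩) with ⟨rfl, rfl⟩ | ⟨rfl, rfl⟩
    · exact hr
    · rwa [Set.pair_comm]

theorem exists_colon_coverIdeal_eq_of_isPrime [Finite V] {f : MvPolynomial V K}
    (hf : ((coverIdeal K G).colon (Ideal.span {f})).IsPrime) :
    ∃ u v, G.Adj u v ∧ f ∉ variableIdeal K {u, v} ∧
      (coverIdeal K G).colon (Ideal.span {f}) = variableIdeal K {u, v} := by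
  classical
  let := Fintype.ofFinite V
  let s : Finset (V × V) := {p | G.Adj p.1 p.2 ∧ f ∉ variableIdeal K {p.1, p.2}}
  have colon_eq : (coverIdeal K G).colon (Ideal.span {f}) =
      s.inf fun p ↦ variableIdeal K {p.1, p.2} := by
    ext r
    rw [mem_colon_coverIdeal_iff]
    simp [Submodule.mem_finsetInf, s]
  obtain ⟨⟨u, v⟩, hs, le⟩ := (Ideal.IsPrime.inf_le' hf).1 colon_eq.ge
  obtain ⟨huv, hfuv⟩ := (Finset.mem_filter.1 hs).2
  exact ⟨u, v, huv, hfuv, le_antisymm (fun r hr ↦ mem_colon_coverIdeal_iff.1 hr u v huv hfuv) le⟩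

theorem exists_isCoverExcept_card_le [Finite V] {f : MvPolynomial V K} {d : ℕ}
    (hd : f.IsHomogeneous d) (hf : ((coverIdeal K G).colon (Ideal.span {f})).IsPrime) :
    ∃ u v A, IsCoverExcept G u v A ∧ A.card ≤ d := by
  obtain ⟨u, v, huv, hfuv, colon_eq⟩ := exists_colon_coverIdeal_eq_of_isPrime hf
  obtain ⟨m, hm, hm_uv⟩ : ∃ m ∈ f.support, ∀ i ∈ ({u, v} : Set V), m i = 0 := by
    simpa [mem_variableIdeal_iff] using hfuv
  refine ⟨u, v, m.support, fun a b ↦ ⟨fun ⟨hab, ha, hb⟩ ↦ ?_, fun h ↦ ?_⟩, ?_⟩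
  · have hfab : f ∉ variableIdeal K {a, b} := fun h ↦ by
      obtain ⟨i, rfl | rfl, hi⟩ := mem_variableIdeal_iff.1 h m hm
      · exact ha (Finsupp.mem_support_iff.2 hi)
      · exact hb (Finsupp.mem_support_iff.2 hi)
    have uv_subset : ({u, v} : Set V) ⊆ {a, b} := by
      rw [← variableIdeal_le_variableIdeal_iff (K := K), ← colon_eq]
      exact fun r hr ↦ mem_colon_coverIdeal_iff.1 hr a b hab hfab
    simp only [Set.insert_subset_iff, Set.singleton_subset_iff, Set.mem_insert_iff,
      Set.mem_singleton_iff] at uv_subset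
    have := huv.ne
    grind
  · have hu : u ∉ m.support := Finsupp.notMem_support_iff.2 (hm_uv u (by simp))
    have hv : v ∉ m.support := Finsupp.notMem_support_iff.2 (hm_uv v (by simp))
    rcases Sym2.eq_iff.1 h with ⟨rfl, rfl⟩ | ⟨rfl, rfl⟩
    · exact ⟨huv, hu, hv⟩
    · exact ⟨huv.symm, hv, hu⟩
  · rw [hd.degree_eq_sum_deg_support hm, Finset.card_eq_sum_ones]
    exact Finset.sum_le_sum fun i hi ↦ Nat.one_le_iff_ne_zero.2 (Finsupp.mem_support_iff.1 hi)

theorem vNumber_coverIdeal [Finite V] :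
    vNumber (coverIdeal K G) = sInf {d | ∃ u v A, IsCoverExcept G u v A ∧ A.card = d} := by
  refine csInf_eq_csInf_of_forall_exists_le ?_ ?_
  · rintro d ⟨f, hd, hf⟩
    obtain ⟨u, v, A, hA, hAd⟩ := exists_isCoverExcept_card_le hd hf
    exact ⟨A.card, ⟨u, v, A, hA, rfl⟩, hAd⟩
  · rintro _ ⟨u, v, A, hA, rfl⟩
    refine ⟨A.card, ⟨∏ i ∈ A, X i, ?_, ?_⟩, le_rfl⟩
    · simpa using IsHomogeneous.prod A X (fun _ ↦ 1) fun i _ ↦ isHomogeneous_X K i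
    · rw [colon_coverIdeal_prod_X hA]
      exact variableIdeal_isPrime _

end CoverIdeals

section ConeOverStar

variable {V : Type} {w c : V} {T : Finset V}

theorem IsCoverExcept.card_sdiff_le_one [DecidableEq V] {G : SimpleGraph V} {u v : V}
    {A : Finset V} (h : IsCoverExcept G u v A) {p : V} (hp : p ∉ A) {S : Finset V}
    (hS : ∀ i ∈ S, G.Adj p i) : (S \ A).card ≤ 1 := by
  refine Finset.card_le_one.2 fun i hi j hj ↦ ?_
  rw [Finset.mem_sdiff] at hi hj
  exact Sym2.congr_right.1 <|
    (h.1 ⟨hS i hi.1, hp, hi.2⟩).trans (h.1 ⟨hS j hj.1, hp, hj.2⟩).symm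

/-- The cone with apex `w` over the graph on the remaining vertices that consists of the star with
centre `c` and set of leaves `T` and of isolated vertices, for distinct `w` and `c` outside `T`.
The number of leaves controls the v-number of the cover ideal, but not the projective dimension of
`R/I(G)`. -/
def coneOverStar (w c : V) (T : Finset V) : SimpleGraph V :=
  .fromRel fun a b ↦ a = w ∨ (a = c ∧ b ∈ T)

theorem coneOverStar_isUniversal (w c : V) (T : Finset V) : (coneOverStar w c T).IsUniversal w :=
  fun _ h ↦ ⟨h, .inl (.inl rfl)⟩

theorem coneOverStar_adj_center {t : V} (hc : c ∉ T) (ht : t ∈ T) : (coneOverStar w c T).Adj c t :=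
  ⟨(ne_of_mem_of_not_mem ht hc).symm, .inl (.inr ⟨rfl, ht⟩)⟩

theorem coneOverStar_adj_iff_of_ne {a b : V} (hc : c ∉ T) (ha : a ≠ w) (hb : b ≠ w) :
    (coneOverStar w c T).Adj a b ↔ a = c ∧ b ∈ T ∨ b = c ∧ a ∈ T := by
  simp only [coneOverStar, SimpleGraph.fromRel_adj]
  grind

theorem isCoverExcept_coneOverStar [DecidableEq V] {t : V} (hwc : w ≠ c) (hw : w ∉ T) (hc : c ∉ T)
    (ht : t ∈ T) : IsCoverExcept (coneOverStar w c T) c t (insert w (T.erase t)) := by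
  intro a b
  simp only [coneOverStar, SimpleGraph.fromRel_adj, Sym2.eq_iff]
  grind

/-- If `w ∈ A`, then the missed edge contains `c`, and `A` contains all leaves but one; if
`w ∉ A`, then `A` contains all vertices of the star but one. -/
theorem card_le_of_isCoverExcept_coneOverStar {u v : V} {A : Finset V} (hwc : w ≠ c)
    (hw : w ∉ T) (hc : c ∉ T) (hA : IsCoverExcept (coneOverStar w c T) u v A) :
    T.card ≤ A.card := by
  classical
  by_cases hwA : w ∈ A
  · obtain ⟨huv, huA, hvA⟩ := hA.2 rfl
    have hcA : c ∉ A := by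
      rcases (coneOverStar_adj_iff_of_ne hc (ne_of_mem_of_not_mem hwA huA).symm
        (ne_of_mem_of_not_mem hwA hvA).symm).1 huv with ⟨rfl, -⟩ | ⟨rfl, -⟩ <;> assumption
    have missed_leaves := hA.card_sdiff_le_one hcA fun t ht ↦ coneOverStar_adj_center hc ht
    have leaves_lt : (T ∩ A).card < A.card := Finset.card_lt_card
      ⟨Finset.inter_subset_right, fun h ↦ hw (Finset.mem_inter.1 (h hwA)).1⟩
    have := Finset.card_inter_add_card_sdiff T A
    omega
  · have missed_star := hA.card_sdiff_le_one (S := insert c T) hwA fun i hi ↦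
      coneOverStar_isUniversal w c T (by grind)
    have := Finset.le_card_sdiff A (insert c T)
    have := Finset.card_insert_of_notMem hc
    omega

theorem vNumber_coverIdeal_coneOverStar {K : Type} [Field K] [Finite V] (hwc : w ≠ c)
    (hw : w ∉ T) (hc : c ∉ T) (hT : T.Nonempty) :
    vNumber (coverIdeal K (coneOverStar w c T)) = T.card := by
  classical
  rw [vNumber_coverIdeal]
  refine IsLeast.csInf_eq ⟨?_, ?_⟩
  · obtain ⟨t, ht⟩ := hT
    refine ⟨c, t, _, isCoverExcept_coneOverStar hwc hw hc ht, ?_⟩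
    rw [Finset.card_insert_of_notMem (fun h ↦ hw (Finset.mem_of_mem_erase h)),
      Finset.card_erase_add_one ht]
  · rintro _ ⟨u, v, A, hA, rfl⟩
    exact card_le_of_isCoverExcept_coneOverStar hwc hw hc hA

end ConeOverStar

theorem exists_connected_graph_projDim_sub_vNumber_general
    {K V : Type} [Field K] [Finite V] {k : ℕ} (hk : k + 3 ≤ Nat.card V) :
    ∃ G : SimpleGraph V, G.Connected ∧
      projDim (MvPolynomial V K)
          (ModuleCat.of (MvPolynomial V K) (MvPolynomial V K ⧸ edgeIdeal K G)) =
        vNumber (coverIdeal K G) + 1 + k := by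
  classical
  let := Fintype.ofFinite V
  rw [Nat.card_eq_fintype_card] at hk
  have : Nontrivial V := Fintype.one_lt_card_iff_nontrivial.1 (by omega)
  obtain ⟨w, c, hwc⟩ := exists_pair_ne V
  obtain ⟨T, hT, card_T⟩ := Finset.exists_subset_card_eq
    (s := ({w, c}ᶜ : Finset V)) (n := Fintype.card V - 2 - k)
    (by rw [Finset.card_compl, Finset.card_pair hwc]; omega)
  have w_notMem : w ∉ T := fun h ↦ by simpa using hT h
  have c_notMem : c ∉ T := fun h ↦ by simpa using hT h
  have universal := coneOverStar_isUniversal w c T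
  refine ⟨coneOverStar w c T, .of_isUniversal universal, ?_⟩
  rw [projDim_eq_of_projectiveDimension_eq (projectiveDimension_edgeIdeal_of_isUniversal universal),
    vNumber_coverIdeal_coneOverStar hwc w_notMem c_notMem (Finset.card_pos.1 (by omega)), card_T,
    Nat.card_eq_fintype_card]
  omega

/-- For every positive integer `k` there is a connected graph `G_k` on
`6k + 1` vertices with `pd(R/I(G_k)) - 1 - v(J(G_k)) = k`. -/
theorem exists_connected_graph_projDim_sub_vNumber
    {K : Type} [Field K] (k : ℕ) (hk : 1 ≤ k) :
    ∃ G : SimpleGraph (Fin (6 * k + 1)), G.Connected ∧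
      projDim (MvPolynomial (Fin (6 * k + 1)) K)
          (ModuleCat.of (MvPolynomial (Fin (6 * k + 1)) K)
            (MvPolynomial (Fin (6 * k + 1)) K ⧸ edgeIdeal K G)) - 1 -
        vNumber (coverIdeal K G) = k := by
  obtain ⟨G, connected, h⟩ := exists_connected_graph_projDim_sub_vNumber_general
    (K := K) (V := Fin (6 * k + 1)) (k := k) (by simp only [Nat.card_fin]; omega)
  exact ⟨G, connected, by omega⟩

end
end
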